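/- Let A be a piecewise-Koszul algebra with period p = 3 and jump degree d. Then for every integer k ≥ 1, the algebra E_k(A) = ⊕_{n≥0} Ext^{3kn}_A(A_0,A_0), graded with n-th component Ext^{3kn}_A(A_0,A_0) and multiplication the Yoneda product, is a Koszul algebra: its degree-zero part admits a minimal graded projective resolution over E_k(A) whose n-th term is generated in degree n. -/

import Mathlib

noncomputable section

/-- The jump function `δ^d_p(n) = ((n − (n mod p))/p)·d + (n mod p)`. -/
def jump (d p n : ℕ) : ℕ := (n - n % p) / p * d + n % p

/-- A positively graded `F`-algebra `A = ⊕_{i≥0} A_i`. -/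
structure GradedAlg (F : Type) [Field F] where
  A : Type
  [ringA : Ring A]
  [algA : Algebra F A]
  grading : ℕ → Submodule F A
  [graded : GradedAlgebra grading]

attribute [instance] GradedAlg.ringA GradedAlg.algA GradedAlg.graded

namespace GradedAlg

variable {F : Type} [Field F] (𝒜 : GradedAlg F)

/-- The graded Jacobson radical `J = ⊕_{i≥1} A_i`, i.e. the irrelevant ideal. -/
def jideal : Ideal 𝒜.A := (HomogeneousIdeal.irrelevant 𝒜.grading).toIdeal

/-- The standing assumptions: `A_0` is a semisimple Artin algebra, `A` is generated in
degrees 0 and 1 (`A_i · A_j = A_{i+j}`), and `A_1` is finite dimensional over `F`. -/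
structure Standing : Prop where
  semisimple : IsSemisimpleRing ↥(𝒜.grading 0)
  artinian : IsArtinianRing ↥(𝒜.grading 0)
  gen01 : ∀ i j : ℕ, 𝒜.grading i * 𝒜.grading j = 𝒜.grading (i + j)
  findim : FiniteDimensional F ↥(𝒜.grading 1)

/-- A (ℤ-)graded module over the graded algebra `𝒜`. -/
structure GMod where
  M : Type
  [acg : AddCommGroup M]
  [modF : Module F M]
  [modA : Module 𝒜.A M]
  [tower : IsScalarTower F 𝒜.A M]
  [scomm : SMulCommClass 𝒜.A F M]
  grading : ℤ → Submodule F M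
  sup_eq_top : (⨆ j : ℤ, grading j) = ⊤
  indep : iSupIndep grading
  smul_mem : ∀ {i : ℕ} {j : ℤ} {a : 𝒜.A} {m : M},
    a ∈ 𝒜.grading i → m ∈ grading j → a • m ∈ grading ((i : ℤ) + j)

attribute [instance] GMod.acg GMod.modF GMod.modA GMod.tower GMod.scomm

variable {𝒜}

/-- A degree-zero morphism of graded modules. -/
structure GHom (M N : 𝒜.GMod) where
  lin : M.M →ₗ[𝒜.A] N.M
  grad : ∀ (j : ℤ) (x : M.M), x ∈ M.grading j → lin x ∈ N.grading j

/-- A graded module is generated in degree `s` if `A · M_s = M`. -/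
def GMod.GenInDeg (M : 𝒜.GMod) (s : ℤ) : Prop :=
  Submodule.span 𝒜.A (M.grading s : Set M.M) = ⊤

/-- `T` is the trivial graded module `A_0 = A/J`, concentrated in degree `0`. -/
def IsTrivialGMod (T : 𝒜.GMod) : Prop :=
  (∀ j : ℤ, j ≠ 0 → T.grading j = ⊥) ∧
    Nonempty (T.M ≃ₗ[𝒜.A] (𝒜.A ⧸ 𝒜.jideal))

/-- A minimal graded projective resolution
`⋯ → P_{n+1} → P_n → ⋯ → P_0 → M → 0` of the graded module `M`,
with finitely generated terms. -/
structure MinRes (M : 𝒜.GMod) where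
  P : ℕ → 𝒜.GMod
  d : ∀ n : ℕ, GHom (P (n + 1)) (P n)
  aug : GHom (P 0) M
  fg : ∀ n, Module.Finite 𝒜.A (P n).M
  projective : ∀ n, Module.Projective 𝒜.A (P n).M
  aug_surj : Function.Surjective aug.lin
  exact_aug : LinearMap.range (d 0).lin = LinearMap.ker aug.lin
  exact : ∀ n, LinearMap.range (d (n + 1)).lin = LinearMap.ker (d n).lin
  minimal : ∀ n, LinearMap.range (d n).lin ≤ 𝒜.jideal • (⊤ : Submodule 𝒜.A (P n).M)

variable (𝒜)

/-- `M` is a piecewise-Koszul module (period `p`, jump degree `d`, shift `s`):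
it has a minimal graded projective resolution with `P_n` generated in degree `δ^d_p(n) + s`. -/
def IsPKMod (p d : ℕ) (s : ℤ) (M : 𝒜.GMod) : Prop :=
  ∃ R : MinRes M, ∀ n : ℕ, (R.P n).GenInDeg ((jump d p n : ℤ) + s)

/-- `A` is a piecewise-Koszul algebra (period `p`, jump degree `d`): the trivial module `T`
admits a minimal graded projective resolution with `P_n` generated in degree `δ^d_p(n)`. -/
def IsPKAlg (p d : ℕ) (T : 𝒜.GMod) : Prop := IsPKMod 𝒜 p d 0 T

/-- A Koszul module: a minimal graded projective resolution with `P_n` generated in degree `n`. -/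
def IsKoszulMod (M : 𝒜.GMod) : Prop :=
  ∃ R : MinRes M, ∀ n : ℕ, (R.P n).GenInDeg (n : ℤ)

variable {𝒜}

section Ext

variable (T : 𝒜.GMod) {M : 𝒜.GMod}

/-- The space of `A`-linear maps `P_n → T` (cochains). -/
abbrev HomSp (R : MinRes M) (n : ℕ) := (R.P n).M →ₗ[𝒜.A] T.M

/-- Precomposition, as an `F`-linear map on cochains. -/
def precompF {M₁ M₂ : 𝒜.GMod} (g : M₁.M →ₗ[𝒜.A] M₂.M) :
    (M₂.M →ₗ[𝒜.A] T.M) →ₗ[F] (M₁.M →ₗ[𝒜.A] T.M) where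
  toFun f := f ∘ₗ g
  map_add' f₁ f₂ := by ext x; simp
  map_smul' c f := by ext x; simp

/-- Cocycles: maps `P_n → T` vanishing on the image of `P_{n+1}`. -/
def cocyc (R : MinRes M) (n : ℕ) : Submodule F (HomSp T R n) :=
  LinearMap.ker (precompF T (R.d n).lin)

/-- Coboundaries: maps `P_n → T` factoring through `d_{n-1}`. -/
def cobound (R : MinRes M) : (n : ℕ) → Submodule F (HomSp T R n)
  | 0 => ⊥
  | n + 1 => LinearMap.range (precompF T (R.d n).lin)

/-- The coboundaries, viewed inside the cocycles. -/
def extRel (R : MinRes M) (n : ℕ) : Submodule F ↥(cocyc T R n) :=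
  (cobound T R n).comap (cocyc T R n).subtype

/-- `Ext^n_A(M, T)`, computed from the resolution `R` of `M`. -/
abbrev ExtQ (R : MinRes M) (n : ℕ) := ↥(cocyc T R n) ⧸ extRel T R n

/-- The class in `Ext^n_A(M,T)` of a cocycle. -/
def extCls {R : MinRes M} {n : ℕ} {f : HomSp T R n} (hf : f ∈ cocyc T R n) :
    ExtQ T R n :=
  Submodule.Quotient.mk ⟨f, hf⟩

/-- Cochains of shift-degree `j`: maps `P_n → T` vanishing on every `(P_n)_i` with `i ≠ j`. -/
def homDeg (R : MinRes M) (n : ℕ) (j : ℤ) : Submodule F (HomSp T R n) where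
  carrier := {f | ∀ i : ℤ, i ≠ j → ∀ x ∈ (R.P n).grading i, f x = 0}
  add_mem' := fun hf hg i hi x hx => by
    simp only [LinearMap.add_apply, hf i hi x hx, hg i hi x hx, add_zero]
  zero_mem' := fun i hi x hx => rfl
  smul_mem' := fun c f hf i hi x hx => by
    simp only [LinearMap.smul_apply, hf i hi x hx, smul_zero]

/-- The shift-degree `j` component `Ext^n_A(M,T)_j`. -/
def extComp (R : MinRes M) (n : ℕ) (j : ℤ) : Submodule F (ExtQ T R n) :=
  Submodule.map (extRel T R n).mkQ ((homDeg T R n j).comap (cocyc T R n).subtype)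

/-- Transport `Ext` along an equality of cohomological degrees. -/
def extCast (R : MinRes M) {a b : ℕ} (h : a = b) : ExtQ T R a ≃ₗ[F] ExtQ T R b :=
  h ▸ LinearEquiv.refl F (ExtQ T R a)

/-- A chain map lifting of a cochain `g : P_j → T` over the resolutions `RM` of `M`
and `RT` of `T`. -/
structure ChainLift (RT : MinRes T) (RM : MinRes M) (j : ℕ)
    (g : (RM.P j).M →ₗ[𝒜.A] T.M) where
  ℓ : ∀ m k : ℕ, m = k + j → ((RM.P m).M →ₗ[𝒜.A] (RT.P k).M)
  comm_aug : RT.aug.lin ∘ₗ ℓ j 0 (by omega) = g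
  comm : ∀ k : ℕ, (RT.d k).lin ∘ₗ ℓ (k + j + 1) (k + 1) (by omega) =
    ℓ (k + j) k rfl ∘ₗ (RM.d (k + j)).lin

/-- `μ` is the (bigraded family of) Yoneda product(s)
`Ext^i(T,T) ⊗ Ext^j(M,T) → Ext^{i+j}(M,T)`: it is computed by composing a cocycle
`f : P_i → T` with a chain lifting of a cocycle `g : Q_j → T`. -/
def IsYonedaMul (RT : MinRes T) (RM : MinRes M)
    (μ : ∀ i j : ℕ, ExtQ T RT i →ₗ[F] ExtQ T RM j →ₗ[F] ExtQ T RM (i + j)) : Prop :=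
  ∀ (i j : ℕ) (f : HomSp T RT i) (hf : f ∈ cocyc T RT i)
    (g : HomSp T RM j) (hg : g ∈ cocyc T RM j)
    (L : ChainLift T RT RM j g)
    (hc : f ∘ₗ L.ℓ (i + j) i (by omega) ∈ cocyc T RM (i + j)),
    μ i j (extCls T hf) (extCls T hg) = extCls T hc

/-- `E(A) = Ext^*_A(A_0,A_0)` is generated in the ext-degrees belonging to `S`. -/
def ExtGenIn (RT : MinRes T)
    (μ : ∀ i j : ℕ, ExtQ T RT i →ₗ[F] ExtQ T RT j →ₗ[F] ExtQ T RT (i + j))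
    (S : Set ℕ) : Prop :=
  ∀ W : (n : ℕ) → Submodule F (ExtQ T RT n),
    (∀ n ∈ S, W n = ⊤) →
    (∀ (i j : ℕ) (x : ExtQ T RT i) (y : ExtQ T RT j),
      x ∈ W i → y ∈ W j → μ i j x y ∈ W (i + j)) →
    ∀ n, W n = ⊤

/-- `E(M) = Ext^*_A(M,A_0)` is generated in degree `0` as a graded `E(A)`-module. -/
def ExtModGenInZero (RT : MinRes T) (RM : MinRes M)
    (μ : ∀ i j : ℕ, ExtQ T RT i →ₗ[F] ExtQ T RM j →ₗ[F] ExtQ T RM (i + j)) : Prop :=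
  ∀ W : (n : ℕ) → Submodule F (ExtQ T RM n),
    W 0 = ⊤ →
    (∀ (i j : ℕ) (x : ExtQ T RT i) (y : ExtQ T RM j),
      y ∈ W j → μ i j x y ∈ W (i + j)) →
    ∀ n, W n = ⊤

end Ext

/-- `JM` is (a graded module isomorphic to) the submodule `J·M` of `M`. -/
def IsJM (M JM : 𝒜.GMod) : Prop :=
  ∃ e : JM.M ≃ₗ[𝒜.A] ↥(𝒜.jideal • (⊤ : Submodule 𝒜.A M.M)),
    ∀ (j : ℤ) (x : JM.M), x ∈ JM.grading j ↔ ((e x : M.M) ∈ M.grading j)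

/-- `Q` is (a graded module isomorphic to) the quotient `M/JM`. -/
def IsQuotJM (M Q : 𝒜.GMod) : Prop :=
  ∃ e : Q.M ≃ₗ[𝒜.A] (M.M ⧸ (𝒜.jideal • (⊤ : Submodule 𝒜.A M.M))),
    ∀ j : ℤ, Q.grading j = Submodule.map
      ((e.symm.toLinearMap ∘ₗ (𝒜.jideal • (⊤ : Submodule 𝒜.A M.M)).mkQ).restrictScalars F)
      (M.grading j)

/-- `W` is (isomorphic to) the `n`-th syzygy `Ω^n(M)` of `M` in the minimal graded
projective resolution `R`. -/
def IsSyzygy {M : 𝒜.GMod} (R : MinRes M) : ℕ → 𝒜.GMod → Prop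
  | 0, W => ∃ e : W.M ≃ₗ[𝒜.A] M.M,
      ∀ (j : ℤ) (x : W.M), x ∈ W.grading j ↔ e x ∈ M.grading j
  | 1, W => ∃ e : W.M ≃ₗ[𝒜.A] ↥(LinearMap.ker R.aug.lin),
      ∀ (j : ℤ) (x : W.M), x ∈ W.grading j ↔ ((e x : (R.P 0).M) ∈ (R.P 0).grading j)
  | (n + 2), W => ∃ e : W.M ≃ₗ[𝒜.A] ↥(LinearMap.ker (R.d n).lin),
      ∀ (j : ℤ) (x : W.M), x ∈ W.grading j ↔ ((e x : (R.P (n + 1)).M) ∈ (R.P (n + 1)).grading j)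

end GradedAlg

/-!
A δ-Koszul module is one whose minimal resolution has its `n`-th term generated in degree `δ n`,
up to a shift. Suppose that `δ` is strictly increasing with `δ 0 = 0` and `δ (n + r) = δ n + t`,
let `T` be the trivial module, assumed δ-Koszul, and let `B = ⨁ₙ Ext^{rn}(T, T)`. For a δ-Koszul
module `M`, the top `S = M / JM` is a direct summand of a power of `T`, so that
`E(S) = ⨁ₙ Ext^{rn}(S, T)` is a projective `B`-module generated in degree `0`. Comparing generating
degrees shows that `Extⁿ(S, T) → Extⁿ(M, T)` is surjective for every `n`, and that `JM` has its
resolution generated in the degrees `δ (n + 1)`. Hence `N = Ω^{r-1}(JM)` is again δ-Koszul, and the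
long exact sequences of `0 → JM → M → S → 0` break up into `0 → E(N)[-1] → E(S) → E(M) → 0`.
Iterating this builds a linear resolution of `E(M)` over `B`, for every δ-Koszul `M`; the first
syzygy of the trivial `B`-module is `E(Ω^r T)[-1]`.
-/

namespace GradedAlg

/-! ### Graded modules -/

section GradedModules

variable {F : Type} [Field F] {𝒜 : GradedAlg F}

theorem iSupIndep_of_forall_proj {ι M : Type} [AddCommGroup M] [Module F M]
    (G : ι → Submodule F M) (p : ι → M →ₗ[F] M) (hp : ∀ j, ∀ x ∈ G j, p j x = x)
    (hp_ne : ∀ i j, i ≠ j → ∀ x ∈ G i, p j x = 0) : iSupIndep G := by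
  intro j
  rw [Submodule.disjoint_def]
  intro x hx hx'
  rw [← hp j x hx]
  exact (iSup₂_le fun i hij y hy => hp_ne i j hij y hy :
    ⨆ (i) (_ : i ≠ j), G i ≤ LinearMap.ker (p j)) hx'

theorem mem_jideal {a : 𝒜.A} : a ∈ 𝒜.jideal ↔ GradedRing.proj 𝒜.grading 0 a = 0 :=
  HomogeneousIdeal.mem_irrelevant_iff _ _

theorem sub_proj_zero_mem_jideal (a : 𝒜.A) : a - GradedRing.proj 𝒜.grading 0 a ∈ 𝒜.jideal := by
  rw [mem_jideal, map_sub, sub_eq_zero]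
  simp [GradedRing.proj_apply]

theorem jideal_eq_ker : 𝒜.jideal = RingHom.ker (GradedRing.projZeroRingHom' 𝒜.grading) := by
  ext a
  rw [mem_jideal, RingHom.mem_ker, ← Subtype.coe_inj]
  rfl

instance jideal_isTwoSided : 𝒜.jideal.IsTwoSided := by
  rw [jideal_eq_ker]
  infer_instance

instance isSemisimpleRing_quotient_jideal [IsSemisimpleRing (𝒜.grading 0)] :
    IsSemisimpleRing (𝒜.A ⧸ 𝒜.jideal) :=
  ((Ideal.quotEquivOfEq jideal_eq_ker).trans (RingHom.quotientKerEquivOfSurjective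
    (GradedRing.projZeroRingHom'_surjective 𝒜.grading))).symm.isSemisimpleRing

section KilledByRadical

variable {S : Type} [AddCommGroup S] [Module 𝒜.A S]

theorem smul_eq_proj_zero_smul (hS : 𝒜.jideal ≤ Module.annihilator 𝒜.A S) (a : 𝒜.A) (x : S) :
    a • x = GradedRing.proj 𝒜.grading 0 a • x := by
  rw [← sub_eq_zero, ← sub_smul]
  exact Module.mem_annihilator.1 (hS (sub_proj_zero_mem_jideal a)) x

theorem isSemisimpleModule_of_jideal_le_annihilator [IsSemisimpleRing (𝒜.grading 0)]
    (hS : 𝒜.jideal ≤ Module.annihilator 𝒜.A S) : IsSemisimpleModule 𝒜.A S := by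
  have hS' : Module.IsTorsionBySet 𝒜.A S 𝒜.jideal :=
    (Module.isTorsionBySet_iff_subset_annihilator _ _).2 hS
  let _ := hS'.module
  exact hS'.isSemisimpleModule_iff.1 inferInstance

theorem jideal_le_annihilator_quotient_smul_top (X : Type) [AddCommGroup X] [Module 𝒜.A X] :
    𝒜.jideal ≤ Module.annihilator 𝒜.A (X ⧸ 𝒜.jideal • (⊤ : Submodule 𝒜.A X)) := by
  intro a ha
  rw [Module.mem_annihilator]
  rintro ⟨x⟩
  exact (Submodule.Quotient.mk_eq_zero _).2 (Submodule.smul_mem_smul ha Submodule.mem_top)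

theorem jideal_smul_top_le_ker {X : Type} [AddCommGroup X] [Module 𝒜.A X]
    (hS : 𝒜.jideal ≤ Module.annihilator 𝒜.A S) (f : X →ₗ[𝒜.A] S) :
    𝒜.jideal • ⊤ ≤ LinearMap.ker f :=
  Submodule.smul_le.2 fun a ha x _ => by
    rw [LinearMap.mem_ker, map_smul, Module.mem_annihilator.1 (hS ha)]

end KilledByRadical

theorem IsTrivialGMod.jideal_le_annihilator {T : 𝒜.GMod} (hT : IsTrivialGMod T) :
    𝒜.jideal ≤ Module.annihilator 𝒜.A T.M := by
  rw [hT.2.some.annihilator_eq, Ideal.annihilator_quotient]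

theorem IsTrivialGMod.grading_zero {T : 𝒜.GMod} (hT : IsTrivialGMod T) : T.grading 0 = ⊤ := by
  rw [eq_top_iff, ← T.sup_eq_top]
  refine iSup_le fun j => ?_
  obtain rfl | hj := eq_or_ne j 0
  · rfl
  · simp [hT.1 j hj]

namespace GMod

variable (X : 𝒜.GMod)

instance decomposition : DirectSum.Decomposition X.grading :=
  (DirectSum.isInternal_submodule_of_iSupIndep_of_iSup_eq_top
    X.indep X.sup_eq_top).chooseDecomposition

/-- The projection of a graded module onto its homogeneous component of degree `j`. -/
def proj (j : ℤ) : X.M →ₗ[F] X.M :=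
  (X.grading j).subtype ∘ₗ DirectSum.component F ℤ (fun i => X.grading i) j ∘ₗ
    (DirectSum.decomposeLinearEquiv X.grading).toLinearMap

theorem proj_apply (j : ℤ) (x : X.M) :
    X.proj j x = (DirectSum.decompose X.grading x j : X.M) := rfl

theorem proj_mem (j : ℤ) (x : X.M) : X.proj j x ∈ X.grading j :=
  (DirectSum.decompose X.grading x j).2

theorem proj_of_mem {j : ℤ} {x : X.M} (hx : x ∈ X.grading j) : X.proj j x = x := by
  rw [proj_apply, DirectSum.decompose_of_mem_same _ hx]

theorem proj_of_mem_ne {i j : ℤ} {x : X.M} (hx : x ∈ X.grading i) (hij : i ≠ j) :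
    X.proj j x = 0 := by
  rw [proj_apply, DirectSum.decompose_of_mem_ne _ hx hij]

theorem exists_sum_proj_eq (x : X.M) : ∃ s : Finset ℤ, ∑ j ∈ s, X.proj j x = x := by
  classical
  exact ⟨_, DirectSum.sum_support_decompose X.grading x⟩

theorem proj_smul {i : ℕ} {a : 𝒜.A} (ha : a ∈ 𝒜.grading i) (j : ℤ) (x : X.M) :
    X.proj j (a • x) = a • X.proj (j - i) x := by
  induction x using DirectSum.Decomposition.inductionOn X.grading with
  | zero => simp
  | add x y hx hy => simp [hx, hy]
  | @homogeneous k x =>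
    have hax := X.smul_mem ha x.2
    obtain rfl | h := eq_or_ne k (j - i)
    · rw [X.proj_of_mem x.2, X.proj_of_mem (by simpa using hax)]
    · rw [X.proj_of_mem_ne x.2 h, X.proj_of_mem_ne hax (by omega), smul_zero]

section GenInDeg

variable {X} {s : ℤ} (hX : X.GenInDeg s)

include hX

theorem GenInDeg.proj_eq_zero {j : ℤ} (hj : j < s) (x : X.M) : X.proj j x = 0 := by
  have hx : x ∈ Submodule.span 𝒜.A (X.grading s : Set X.M) := hX ▸ Submodule.mem_top
  induction hx using Submodule.span_induction generalizing j with
  | mem x hx => exact X.proj_of_mem_ne hx hj.ne'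
  | zero => simp
  | add x y _ _ hx hy => rw [map_add, hx hj, hy hj, add_zero]
  | smul a x _ hx =>
    induction a using DirectSum.Decomposition.inductionOn 𝒜.grading with
    | zero => simp
    | add a b ha hb => rw [add_smul, map_add, ha, hb, add_zero]
    | homogeneous a => rw [X.proj_smul a.2, hx (by omega), smul_zero]

theorem GenInDeg.proj_smul (a : 𝒜.A) (x : X.M) :
    X.proj s (a • x) = GradedRing.proj 𝒜.grading 0 a • X.proj s x := by
  induction a using DirectSum.Decomposition.inductionOn 𝒜.grading with
  | zero => simp
  | add a b ha hb => simp [add_smul, ha, hb]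
  | @homogeneous i a =>
    rw [X.proj_smul a.2, GradedRing.proj_apply]
    obtain rfl | hi := eq_or_ne i 0
    · rw [DirectSum.decompose_of_mem_same _ a.2, Nat.cast_zero, sub_zero]
    · rw [DirectSum.decompose_of_mem_ne _ a.2 hi, zero_smul, hX.proj_eq_zero (by omega), smul_zero]

theorem GenInDeg.proj_eq_zero_of_mem_smul_top {x : X.M}
    (hx : x ∈ 𝒜.jideal • (⊤ : Submodule 𝒜.A X.M)) :
    X.proj s x = 0 := by
  induction hx using Submodule.smul_induction_on' with
  | smul a ha x _ => rw [hX.proj_smul, mem_jideal.1 ha, zero_smul]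
  | add x _ y _ hx hy => rw [map_add, hx, hy, add_zero]

theorem GenInDeg.apply_proj {S : Type} [AddCommGroup S] [Module 𝒜.A S]
    (hS : 𝒜.jideal ≤ Module.annihilator 𝒜.A S) (f : X.M →ₗ[𝒜.A] S) (x : X.M) :
    f (X.proj s x) = f x := by
  have hx : x ∈ Submodule.span 𝒜.A (X.grading s : Set X.M) := hX ▸ Submodule.mem_top
  induction hx using Submodule.span_induction with
  | mem x hx => rw [X.proj_of_mem hx]
  | zero => simp
  | add x y _ _ hx hy => rw [map_add, map_add, map_add, hx, hy]
  | smul a x _ hx => rw [hX.proj_smul, map_smul, map_smul, hx, ← smul_eq_proj_zero_smul hS]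

theorem GenInDeg.mem_smul_top_iff {x : X.M} :
    x ∈ 𝒜.jideal • (⊤ : Submodule 𝒜.A X.M) ↔ X.proj s x = 0 := by
  refine ⟨hX.proj_eq_zero_of_mem_smul_top, fun hx => ?_⟩
  rw [← Submodule.Quotient.mk_eq_zero, ← Submodule.mkQ_apply,
    ← hX.apply_proj (jideal_le_annihilator_quotient_smul_top X.M), hx, map_zero]

theorem GenInDeg.linearMap_ext {Y : Type} [AddCommGroup Y] [Module 𝒜.A Y]
    {f g : X.M →ₗ[𝒜.A] Y} (hfg : ∀ x ∈ X.grading s, f x = g x) : f = g :=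
  LinearMap.ext_on hX hfg

end GenInDeg

/-- A submodule closed under taking homogeneous components, as a graded module. -/
abbrev ofSubmodule (N : Submodule 𝒜.A X.M) (hN : ∀ x ∈ N, ∀ j, X.proj j x ∈ N) : 𝒜.GMod where
  M := N
  grading j := (X.grading j).comap (N.subtype.restrictScalars F)
  sup_eq_top := by
    rw [eq_top_iff]
    intro x _
    obtain ⟨s, hs⟩ := X.exists_sum_proj_eq x
    have hx : x = ∑ j ∈ s, ⟨X.proj j x, hN x x.2 j⟩ := Subtype.ext (by simp [hs])
    rw [hx]
    exact Submodule.sum_mem _ fun j _ => Submodule.mem_iSup_of_mem j (X.proj_mem j x)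
  indep := iSupIndep_of_forall_proj _
    (fun j => (X.proj j).restrict (p := N.restrictScalars F) (q := N.restrictScalars F)
      fun x hx => hN x hx j)
    (fun _ _ hx => Subtype.ext (X.proj_of_mem hx))
    (fun _ _ hij _ hx => Subtype.ext (X.proj_of_mem_ne hx hij))
  smul_mem ha hx := X.smul_mem ha hx

/-- The graded module `X[-t]`, whose component of degree `j` is `X_{j - t}`. -/
abbrev shift (t : ℤ) : 𝒜.GMod where
  M := X.M
  grading j := X.grading (j - t)
  sup_eq_top := by
    rw [eq_top_iff, ← X.sup_eq_top]
    refine iSup_le fun j => ?_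
    simpa using le_iSup (fun j => X.grading (j - t)) (j + t)
  indep := iSupIndep_of_forall_proj _ (fun j => X.proj (j - t)) (fun _ _ hx => X.proj_of_mem hx)
    (fun _ _ hij _ hx => X.proj_of_mem_ne hx (by omega))
  smul_mem ha hx := by
    rw [add_sub_assoc]
    exact X.smul_mem ha hx

/-- The graded module `X^m`. -/
abbrev pow (m : ℕ) : 𝒜.GMod where
  M := Fin m → X.M
  grading j := Submodule.pi Set.univ fun _ => X.grading j
  sup_eq_top := by
    rw [eq_top_iff]
    intro x _
    rw [← Finset.univ_sum_single x]
    refine Submodule.sum_mem _ fun i _ => ?_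
    obtain ⟨s, hs⟩ := X.exists_sum_proj_eq (x i)
    rw [← hs, ← LinearMap.single_apply (R := F), map_sum]
    refine Submodule.sum_mem _ fun j _ => Submodule.mem_iSup_of_mem j ?_
    intro k _
    obtain rfl | hk := eq_or_ne k i
    · simpa using X.proj_mem j (x k)
    · simp [hk]
  indep := iSupIndep_of_forall_proj _ (fun j => LinearMap.pi fun i => X.proj j ∘ₗ LinearMap.proj i)
    (fun _ _ hx => funext fun i => X.proj_of_mem (hx i trivial))
    (fun _ _ hij _ hx => funext fun i => X.proj_of_mem_ne (hx i trivial) hij)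
  smul_mem ha hx := fun i _ => X.smul_mem ha (hx i trivial)

/-- A module annihilated by the radical, as a graded module concentrated in degree `s`. -/
abbrev concentrated (S : Type) [AddCommGroup S] [Module F S] [Module 𝒜.A S]
    [IsScalarTower F 𝒜.A S] [SMulCommClass 𝒜.A F S]
    (hS : 𝒜.jideal ≤ Module.annihilator 𝒜.A S) (s : ℤ) : 𝒜.GMod where
  M := S
  grading j := if j = s then ⊤ else ⊥
  sup_eq_top := eq_top_iff.2 (le_iSup_of_le s (by simp))
  indep := iSupIndep_of_forall_proj _ (fun j => if j = s then LinearMap.id else 0)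
    (fun j x hx => by split_ifs at hx ⊢ <;> simp_all)
    (fun i j hij x hx => by split_ifs at hx ⊢ <;> simp_all)
  smul_mem {i j a m} ha hm := by
    obtain rfl | hi := Nat.eq_zero_or_pos i
    · split_ifs at hm ⊢ <;> simp_all
    · rw [Module.mem_annihilator.1 (hS (HomogeneousIdeal.mem_irrelevant_of_mem _ hi ha))]
      exact Submodule.zero_mem _

theorem mem_concentrated_grading {S : Type} [AddCommGroup S] [Module F S] [Module 𝒜.A S]
    [IsScalarTower F 𝒜.A S] [SMulCommClass 𝒜.A F S]
    {hS : 𝒜.jideal ≤ Module.annihilator 𝒜.A S} {s j : ℤ} {x : S} :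
    x ∈ (concentrated S hS s).grading j ↔ (j ≠ s → x = 0) := by
  by_cases hj : j = s <;> simp [hj]

/-- The top `X / JX` of a graded module generated in degree `s`, concentrated in that degree. -/
abbrev top (s : ℤ) : 𝒜.GMod :=
  concentrated (X.M ⧸ 𝒜.jideal • (⊤ : Submodule 𝒜.A X.M))
    (jideal_le_annihilator_quotient_smul_top X.M) s

end GMod

namespace GHom

variable {X Y Z W : 𝒜.GMod}

/-- The identity of a graded module. -/
protected def id (X : 𝒜.GMod) : GHom X X := ⟨LinearMap.id, fun _ _ hx => hx⟩

/-- Composition of morphisms of graded modules. -/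
def comp (g : GHom Y Z) (f : GHom X Y) : GHom X Z where
  lin := g.lin ∘ₗ f.lin
  grad j x hx := g.grad j _ (f.grad j x hx)

/-- The morphism of shifted graded modules with the same underlying map. -/
def shift (f : GHom X Y) (t : ℤ) : GHom (X.shift t) (Y.shift t) where
  lin := f.lin
  grad _ x hx := f.grad _ x hx

@[simp] theorem id_lin (X : 𝒜.GMod) : (GHom.id X).lin = LinearMap.id := rfl

@[simp] theorem comp_lin (g : GHom Y Z) (f : GHom X Y) : (g.comp f).lin = g.lin ∘ₗ f.lin := rfl

theorem map_proj (f : GHom X Y) (j : ℤ) (x : X.M) : f.lin (X.proj j x) = Y.proj j (f.lin x) := by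
  induction x using DirectSum.Decomposition.inductionOn X.grading with
  | zero => simp
  | add x y hx hy => simp [hx, hy]
  | @homogeneous i x =>
    obtain rfl | h := eq_or_ne i j
    · rw [X.proj_of_mem x.2, Y.proj_of_mem (f.grad _ _ x.2)]
    · rw [X.proj_of_mem_ne x.2 h, Y.proj_of_mem_ne (f.grad _ _ x.2) h, map_zero]

theorem exists_mem_grading_apply_eq (f : GHom X Y) (hf : Function.Surjective f.lin) {j : ℤ}
    {y : Y.M} (hy : y ∈ Y.grading j) : ∃ x ∈ X.grading j, f.lin x = y := by
  obtain ⟨x, rfl⟩ := hf y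
  exact ⟨X.proj j x, X.proj_mem j x, by rw [f.map_proj, Y.proj_of_mem hy]⟩

theorem genInDeg_of_surjective (f : GHom X Y) (hf : Function.Surjective f.lin) {s : ℤ}
    (hX : X.GenInDeg s) : Y.GenInDeg s := by
  rw [GMod.GenInDeg, eq_top_iff, ← LinearMap.range_eq_top.2 hf, LinearMap.range_eq_map, ← hX,
    Submodule.map_span]
  exact Submodule.span_mono (Set.image_subset_iff.2 fun x hx => f.grad _ x hx)

/-- The kernel of a morphism of graded modules. -/
abbrev ker (f : GHom X Y) : 𝒜.GMod :=
  X.ofSubmodule (LinearMap.ker f.lin) fun x hx j => by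
    rw [LinearMap.mem_ker] at hx ⊢
    rw [f.map_proj, hx, map_zero]

/-- The range of a morphism of graded modules. -/
abbrev range (f : GHom X Y) : 𝒜.GMod :=
  Y.ofSubmodule (LinearMap.range f.lin) fun y hy j => by
    obtain ⟨x, rfl⟩ := hy
    exact ⟨X.proj j x, f.map_proj j x⟩

/-- The inclusion of the kernel of a morphism of graded modules. -/
def kerι (f : GHom X Y) : GHom f.ker X := ⟨(LinearMap.ker f.lin).subtype, fun _ _ hx => hx⟩

/-- The inclusion of the range of a morphism of graded modules. -/
def rangeι (f : GHom X Y) : GHom f.range Y := ⟨(LinearMap.range f.lin).subtype, fun _ _ hx => hx⟩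

/-- A morphism of graded modules with codomain restricted to its range. -/
def toRange (f : GHom X Y) : GHom X f.range := ⟨f.lin.rangeRestrict, fun j x hx => f.grad j x hx⟩

/-- The morphism `ker π → ker ρ` induced by a commutative square `ρ ∘ U = u ∘ π`. -/
def kerMap (π : GHom X Y) (ρ : GHom Z W) (U : GHom X Z) (u : GHom Y W)
    (h : ρ.lin ∘ₗ U.lin = u.lin ∘ₗ π.lin) : GHom π.ker ρ.ker where
  lin := U.lin.restrict fun x (hx : π.lin x = 0) => show ρ.lin (U.lin x) = 0 by
    rw [← LinearMap.comp_apply, h, LinearMap.comp_apply, hx, map_zero]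
  grad j x hx := U.grad j x hx

/-- The morphism `(f a)_a : X^m → Y`, `x ↦ ∑ a, f a (x a)`. -/
def powDesc {m : ℕ} (f : Fin m → GHom X Y) : GHom (X.pow m) Y where
  lin := ∑ a, (f a).lin ∘ₗ LinearMap.proj a
  grad j x hx := by
    rw [LinearMap.sum_apply]
    exact Submodule.sum_mem _ fun a _ => (f a).grad j _ (hx a trivial)

/-- The degree-preserving part of a linear map: on `X_j` it is `g` followed by the projection
to `Y_j`. -/
def degreeZeroPart (g : X.M →ₗ[𝒜.A] Y.M) : GHom X Y :=
  let f : X.M →ₗ[F] Y.M :=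
    DirectSum.toModule F ℤ Y.M
      (fun j => Y.proj j ∘ₗ g.restrictScalars F ∘ₗ (X.grading j).subtype) ∘ₗ
      (DirectSum.decomposeLinearEquiv X.grading).toLinearMap
  have hf {j : ℤ} {x : X.M} (hx : x ∈ X.grading j) : f x = Y.proj j (g x) := by
    lift x to X.grading j using hx
    simp [f]
  { lin :=
      { f with
        map_smul' := fun a x => by
          dsimp
          induction x using DirectSum.Decomposition.inductionOn X.grading with
          | zero => simp
          | add x y hx hy => simp only [smul_add, map_add, hx, hy]
          | homogeneous x =>
            induction a using DirectSum.Decomposition.inductionOn 𝒜.grading with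
            | zero => simp
            | add a b ha hb => simp only [add_smul, map_add, ha, hb]
            | homogeneous a =>
              rw [hf x.2, hf (X.smul_mem a.2 x.2), map_smul, Y.proj_smul a.2, add_sub_cancel_left] }
    grad := fun j x hx => by
      change f x ∈ _
      rw [hf hx]
      exact Y.proj_mem _ _ }

theorem degreeZeroPart_apply (g : X.M →ₗ[𝒜.A] Y.M) {j : ℤ} {x : X.M} (hx : x ∈ X.grading j) :
    (degreeZeroPart g).lin x = Y.proj j (g x) := by
  lift x to X.grading j using hx
  simp [degreeZeroPart]

end GHom

end GradedModules

/-! ### Covers and δ-Koszul modules -/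

/-- The sequence `0 → M → N → P → 0` of linear maps `i` and `q` is exact. -/
structure IsShortExact {R M N P : Type} [Ring R] [AddCommGroup M] [AddCommGroup N]
    [AddCommGroup P] [Module R M] [Module R N] [Module R P] (i : M →ₗ[R] N) (q : N →ₗ[R] P) :
    Prop where
  injective : Function.Injective i
  exact : Function.Exact i q
  surjective : Function.Surjective q

section Covers

variable {F : Type} [Field F] {𝒜 : GradedAlg F}

/-- Finitely generated graded projective modules generated in degree `s`. -/
structure GMod.IsProjGenInDeg (P : 𝒜.GMod) (s : ℤ) : Prop where
  finite : Module.Finite 𝒜.A P.M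
  projective : Module.Projective 𝒜.A P.M
  genInDeg : P.GenInDeg s

/-- Projective covers `π : P → X` with `P` finitely generated in degree `s`. Minimality is
expressed by injectivity on the component of degree `s`. -/
structure GHom.IsCover {P X : 𝒜.GMod} (π : GHom P X) (s : ℤ) : Prop where
  isProjGenInDeg : P.IsProjGenInDeg s
  surjective : Function.Surjective π.lin
  eq_zero : ∀ x ∈ P.grading s, π.lin x = 0 → x = 0

variable {s : ℤ} {K L C P Q X Y : 𝒜.GMod}

namespace GMod.IsProjGenInDeg

theorem exists_lift (hP : P.IsProjGenInDeg s) (f : GHom P Y) (π : GHom X Y)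
    (hπ : Function.Surjective π.lin) : ∃ g : GHom P X, π.lin ∘ₗ g.lin = f.lin := by
  have := hP.projective
  obtain ⟨g, hg⟩ := Module.projective_lifting_property π.lin f.lin hπ
  refine ⟨GHom.degreeZeroPart g, hP.genInDeg.linearMap_ext fun x hx => ?_⟩
  rw [LinearMap.comp_apply, GHom.degreeZeroPart_apply g hx, π.map_proj, ← LinearMap.comp_apply,
    hg, Y.proj_of_mem (f.grad _ _ hx)]

theorem of_comp_eq_id (hP : P.IsProjGenInDeg s) (f : GHom P Q) (g : GHom Q P)
    (h : f.lin ∘ₗ g.lin = LinearMap.id) : Q.IsProjGenInDeg s := by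
  have := hP.projective
  have := hP.finite
  have hf : Function.Surjective f.lin := fun x => ⟨_, LinearMap.congr_fun h x⟩
  exact ⟨Module.Finite.of_surjective f.lin hf, Module.Projective.of_split g.lin f.lin h,
    f.genInDeg_of_surjective hf hP.genInDeg⟩

theorem pow (hP : P.IsProjGenInDeg s) (m : ℕ) : (P.pow m).IsProjGenInDeg s := by
  have := hP.finite
  have := hP.projective
  refine ⟨inferInstance, Module.Projective.of_equiv (DFinsupp.linearEquivFunOnFintype
    (R := 𝒜.A) (M := fun _ : Fin m => P.M)), ?_⟩
  rw [GMod.GenInDeg, eq_top_iff]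
  intro x _
  rw [← Finset.univ_sum_single x]
  refine Submodule.sum_mem _ fun i _ => ?_
  have hi : Submodule.span 𝒜.A (P.grading s : Set P.M) ≤
      (Submodule.span 𝒜.A ((P.pow m).grading s : Set (P.pow m).M)).comap
        (LinearMap.single 𝒜.A (fun _ : Fin m => P.M) i) := by
    refine Submodule.span_le.2 fun y hy => Submodule.subset_span fun k _ => ?_
    obtain rfl | hk := eq_or_ne k i
    · simpa using hy
    · simp [hk]
  exact hi (hP.genInDeg ▸ Submodule.mem_top)

theorem shift (hP : P.IsProjGenInDeg s) (t : ℤ) : (P.shift t).IsProjGenInDeg (s + t) :=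
  ⟨hP.finite, hP.projective, by simpa [GMod.GenInDeg] using hP.genInDeg⟩

end GMod.IsProjGenInDeg

theorem GHom.powDesc_surjective {m : ℕ} {f : Fin m → GHom P X}
    (hf : ∀ x, ∃ y : Fin m → P.M, ∑ a, (f a).lin (y a) = x) :
    Function.Surjective (GHom.powDesc f).lin := fun x => by
  obtain ⟨y, rfl⟩ := hf x
  exact ⟨y, by simp [GHom.powDesc]⟩

namespace GMod.GenInDeg

theorem eq_zero_of_mkQ_eq_zero (hX : X.GenInDeg s) {x : X.M} (hx : x ∈ X.grading s)
    (h : (𝒜.jideal • (⊤ : Submodule 𝒜.A X.M)).mkQ x = 0) : x = 0 := by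
  rw [← X.proj_of_mem hx]
  exact hX.proj_eq_zero_of_mem_smul_top ((Submodule.Quotient.mk_eq_zero _).1 h)

/-- The projection of a graded module generated in degree `s` onto its top. -/
def toTop (hX : X.GenInDeg s) : GHom X (X.top s) where
  lin := (𝒜.jideal • (⊤ : Submodule 𝒜.A X.M)).mkQ
  grad j x hx := GMod.mem_concentrated_grading.2 fun hj => by
    rw [← hX.apply_proj (jideal_le_annihilator_quotient_smul_top X.M), X.proj_of_mem_ne hx hj,
      map_zero]

theorem toTop_surjective (hX : X.GenInDeg s) : Function.Surjective hX.toTop.lin :=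
  Submodule.mkQ_surjective _

theorem toTop_eq_zero_iff (hX : X.GenInDeg s) {x : X.M} :
    hX.toTop.lin x = 0 ↔ X.proj s x = 0 := by
  rw [← hX.mem_smul_top_iff]
  exact Submodule.Quotient.mk_eq_zero _

theorem exists_comp_toTop_eq (hX : X.GenInDeg s) {S : Type} [AddCommGroup S] [Module 𝒜.A S]
    (hS : 𝒜.jideal ≤ Module.annihilator 𝒜.A S) (f : X.M →ₗ[𝒜.A] S) :
    ∃ g : (X.top s).M →ₗ[𝒜.A] S, g ∘ₗ hX.toTop.lin = f :=
  ⟨Submodule.liftQ _ f (jideal_smul_top_le_ker hS f), Submodule.liftQ_mkQ _ _ _⟩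

end GMod.GenInDeg

/-- The morphism of tops induced by a morphism of graded modules. -/
def GHom.topMap (f : GHom X Y) (s : ℤ) : GHom (X.top s) (Y.top s) where
  lin := Submodule.mapQ _ _ f.lin (Submodule.smul_le.2 fun a ha x _ => by
    rw [Submodule.mem_comap, map_smul]
    exact Submodule.smul_mem_smul ha Submodule.mem_top)
  grad j x hx := GMod.mem_concentrated_grading.2 fun hj => by
    rw [GMod.mem_concentrated_grading.1 hx hj, map_zero]

theorem GHom.topMap_comp_toTop (hX : X.GenInDeg s) (hY : Y.GenInDeg s) (f : GHom X Y) :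
    (f.topMap s).lin ∘ₗ hX.toTop.lin = hY.toTop.lin ∘ₗ f.lin := rfl

/-- An idempotent endomorphism `ε` of `P` whose range is a projective cover of the target of
`π : P → X`. -/
structure GHom.IsCoverIdem (π : GHom P X) (ε : GHom P P) (s : ℤ) : Prop where
  idem : ∀ x, ε.lin (ε.lin x) = ε.lin x
  map_apply : ∀ x, π.lin (ε.lin x) = π.lin x
  eq_zero : ∀ x ∈ P.grading s, π.lin x = 0 → ε.lin x = 0

/-- The idempotent lifts `σ ∘ top π`, where `σ` is a section of `top π`. -/
theorem GHom.exists_isCoverIdem [IsSemisimpleRing (𝒜.grading 0)] (hP : P.IsProjGenInDeg s)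
    (π : GHom P X) (hπ : Function.Surjective π.lin) : ∃ ε : GHom P P, π.IsCoverIdem ε s := by
  have hPs := hP.genInDeg
  have hXs := π.genInDeg_of_surjective hπ hPs
  have hπs : (π.topMap s).lin ∘ₗ hPs.toTop.lin = hXs.toTop.lin ∘ₗ π.lin :=
    π.topMap_comp_toTop hPs hXs
  have := isSemisimpleModule_of_jideal_le_annihilator (𝒜 := 𝒜)
    (jideal_le_annihilator_quotient_smul_top P.M)
  obtain ⟨σ, hσ⟩ := IsSemisimpleModule.lifting_property (π.topMap s).lin
    (.of_comp (g := hPs.toTop.lin) (by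
      rw [← LinearMap.coe_comp, hπs]
      exact hXs.toTop_surjective.comp hπ)) LinearMap.id
  let τ : GHom P (P.top s) := ⟨σ ∘ₗ hXs.toTop.lin ∘ₗ π.lin, fun j x hx =>
    GMod.mem_concentrated_grading.2 fun hj => by
      have := GMod.mem_concentrated_grading.1 (hXs.toTop.grad j _ (π.grad j x hx)) hj
      rw [LinearMap.comp_apply, LinearMap.comp_apply, this, map_zero]⟩
  obtain ⟨ε, hε⟩ := hP.exists_lift τ hPs.toTop hPs.toTop_surjective
  have map_apply : π.lin ∘ₗ ε.lin = π.lin := hPs.linearMap_ext fun x hx => by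
    refine sub_eq_zero.1 (hXs.eq_zero_of_mkQ_eq_zero
      (Submodule.sub_mem _ (π.grad _ _ (ε.grad _ _ hx)) (π.grad _ _ hx)) ?_)
    rw [map_sub, sub_eq_zero]
    calc hXs.toTop.lin (π.lin (ε.lin x)) = (π.topMap s).lin (hPs.toTop.lin (ε.lin x)) := rfl
      _ = (π.topMap s).lin (σ (hXs.toTop.lin (π.lin x))) :=
        congrArg _ (LinearMap.congr_fun hε x)
      _ = hXs.toTop.lin (π.lin x) := LinearMap.congr_fun hσ _
  have eq_zero (x) (hx : x ∈ P.grading s) (h : π.lin x = 0) : ε.lin x = 0 :=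
    hPs.eq_zero_of_mkQ_eq_zero (ε.grad _ _ hx)
      ((LinearMap.congr_fun hε x).trans (by simp [τ, h]))
  have idem : ε.lin ∘ₗ ε.lin = ε.lin := hPs.linearMap_ext fun x hx => by
    rw [LinearMap.comp_apply, ← sub_eq_zero, ← map_sub]
    refine eq_zero _ (Submodule.sub_mem _ (ε.grad _ _ hx) hx) ?_
    rw [map_sub, ← LinearMap.comp_apply, map_apply, sub_self]
  exact ⟨ε, LinearMap.congr_fun idem, LinearMap.congr_fun map_apply, eq_zero⟩

namespace GHom.IsCoverIdem

variable {π : GHom P X} {ε : GHom P P} (hε : π.IsCoverIdem ε s) (hP : P.IsProjGenInDeg s)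

include hε hP

theorem isCover_range (hπ : Function.Surjective π.lin) : (π.comp ε.rangeι).IsCover s where
  isProjGenInDeg := hP.of_comp_eq_id ε.toRange ε.rangeι <| LinearMap.ext fun x => by
    obtain ⟨_, y, rfl⟩ := x
    exact Subtype.ext (hε.idem y)
  surjective y := by
    obtain ⟨x, rfl⟩ := hπ y
    exact ⟨⟨ε.lin x, x, rfl⟩, hε.map_apply x⟩
  eq_zero := by
    rintro ⟨_, x, rfl⟩ hx h
    exact Subtype.ext ((hε.idem x).symm.trans (hε.eq_zero _ hx h))

theorem isProjGenInDeg_ker : ε.ker.IsProjGenInDeg s := by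
  let f : GHom P ε.ker :=
    ⟨(LinearMap.id - ε.lin).codRestrict _ fun x => by simp [hε.idem],
      fun j x hx => Submodule.sub_mem _ hx (ε.grad j x hx)⟩
  refine hP.of_comp_eq_id f ε.kerι (LinearMap.ext fun x => Subtype.ext ?_)
  exact (congrArg (x.1 - ·) (LinearMap.mem_ker.1 x.2)).trans (sub_zero _)

end GHom.IsCoverIdem

theorem GHom.exists_isCover [IsSemisimpleRing (𝒜.grading 0)] (hP : P.IsProjGenInDeg s)
    (π : GHom P X) (hπ : Function.Surjective π.lin) :
    ∃ (Q : 𝒜.GMod) (ρ : GHom Q X), ρ.IsCover s := by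
  obtain ⟨ε, hε⟩ := π.exists_isCoverIdem hP hπ
  exact ⟨_, _, hε.isCover_range hP hπ⟩

theorem GHom.isShortExact_kerι_toRange (f : GHom X Y) : IsShortExact f.kerι.lin f.toRange.lin where
  injective := Subtype.val_injective
  exact x := ⟨fun h => ⟨⟨x, congrArg Subtype.val h⟩, rfl⟩, by
    rintro ⟨y, rfl⟩
    exact Subtype.ext y.2⟩
  surjective := f.lin.surjective_rangeRestrict

theorem isShortExact_kerMap_comp (π : GHom P X) (ρ : GHom X Y) (hπ : Function.Surjective π.lin) :
    IsShortExact (GHom.kerMap π (ρ.comp π) (GHom.id P) ρ rfl).lin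
      (GHom.kerMap (ρ.comp π) ρ π (GHom.id Y) rfl).lin where
  injective x y h := Subtype.ext (congrArg Subtype.val h :)
  exact x := ⟨fun h => ⟨⟨x.1, congrArg Subtype.val h⟩, rfl⟩, by
    rintro ⟨y, rfl⟩
    exact Subtype.ext y.2⟩
  surjective y := by
    obtain ⟨x, hx⟩ := hπ y.1
    exact ⟨⟨x, (congrArg ρ.lin hx).trans y.2⟩, Subtype.ext hx⟩

namespace IsShortExact

variable {i : GHom K L} {q : GHom L C}

theorem exists_factor (h : IsShortExact i.lin q.lin) (f : GHom X L)
    (hf : q.lin ∘ₗ f.lin = 0) : ∃ g : GHom X K, i.lin ∘ₗ g.lin = f.lin := by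
  let e := LinearEquiv.ofInjective i.lin h.injective
  let g : X.M →ₗ[𝒜.A] K.M := e.symm ∘ₗ
    f.lin.codRestrict (LinearMap.range i.lin) fun x => (h.exact _).1 (LinearMap.congr_fun hf x)
  have hg (x) : i.lin (g x) = f.lin x := congrArg Subtype.val (e.apply_symm_apply _)
  refine ⟨⟨g, fun j x hx => ?_⟩, LinearMap.ext hg⟩
  have : K.proj j (g x) = g x := h.injective <| by
    rw [i.map_proj, hg, L.proj_of_mem (f.grad j x hx)]
  exact this ▸ K.proj_mem _ _

theorem kerMap {PK PL PC : 𝒜.GMod} {φ : GHom PK PL} {ψ : GHom PL PC} {πK : GHom PK K}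
    {πL : GHom PL L} {πC : GHom PC C} (hφψ : IsShortExact φ.lin ψ.lin)
    (h : IsShortExact i.lin q.lin) (hφ : πL.lin ∘ₗ φ.lin = i.lin ∘ₗ πK.lin)
    (hψ : πC.lin ∘ₗ ψ.lin = q.lin ∘ₗ πL.lin) (hπK : Function.Surjective πK.lin) :
    IsShortExact (GHom.kerMap πK πL φ i hφ).lin (GHom.kerMap πL πC ψ q hψ).lin where
  injective x y hxy := Subtype.ext (hφψ.injective (congrArg Subtype.val hxy :))
  exact y := by
    refine ⟨fun hy => ?_, ?_⟩
    · obtain ⟨x, hx⟩ := (hφψ.exact y.1).1 (congrArg Subtype.val hy :)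
      refine ⟨⟨x, h.injective ?_⟩, Subtype.ext hx⟩
      rw [← LinearMap.comp_apply, ← hφ, LinearMap.comp_apply, hx, map_zero]
      exact y.2
    · rintro ⟨x, rfl⟩
      exact Subtype.ext (hφψ.exact.apply_apply_eq_zero x.1)
  surjective z := by
    obtain ⟨y, hy⟩ := hφψ.surjective z.1
    obtain ⟨k, hk⟩ := (h.exact (πL.lin y)).1 <| by
      rw [← LinearMap.comp_apply, ← hψ, LinearMap.comp_apply, hy]
      exact z.2
    obtain ⟨x, rfl⟩ := hπK k
    refine ⟨⟨y - φ.lin x, ?_⟩, Subtype.ext ?_⟩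
    · rw [LinearMap.mem_ker, map_sub, ← LinearMap.comp_apply πL.lin, hφ, LinearMap.comp_apply,
        hk, sub_self]
    · exact (map_sub ψ.lin _ _).trans
        (by rw [hφψ.exact.apply_apply_eq_zero, sub_zero, hy])

theorem isCover_of_isCoverIdem {PL : 𝒜.GMod} {πL : GHom PL L} {ε : GHom PL PL}
    {πK : GHom ε.ker K} (h : IsShortExact i.lin q.lin) (hK : K.GenInDeg s)
    (hπL : πL.IsCover s) (hε : (q.comp πL).IsCoverIdem ε s)
    (hπK : i.lin ∘ₗ πK.lin = πL.lin ∘ₗ ε.kerι.lin) : πK.IsCover s where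
  isProjGenInDeg := hε.isProjGenInDeg_ker hπL.isProjGenInDeg
  surjective := by
    rw [← LinearMap.range_eq_top, eq_top_iff, ← hK, Submodule.span_le]
    intro k hk
    obtain ⟨p, hp, hpk⟩ := πL.exists_mem_grading_apply_eq hπL.surjective (i.grad _ _ hk)
    have hεp : ε.lin p = 0 := hε.eq_zero p hp <| by
      rw [GHom.comp_lin, LinearMap.comp_apply, hpk, h.exact.apply_apply_eq_zero]
    exact ⟨⟨p, hεp⟩, h.injective ((LinearMap.congr_fun hπK ⟨p, hεp⟩).trans hpk)⟩
  eq_zero x hx hx0 := by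
    refine Subtype.ext (hπL.eq_zero _ hx ((LinearMap.congr_fun hπK x).symm.trans ?_))
    rw [LinearMap.comp_apply, hx0, map_zero]

theorem exists_kernels [IsSemisimpleRing (𝒜.grading 0)] {PL : 𝒜.GMod} {πL : GHom PL L}
    (h : IsShortExact i.lin q.lin) (hK : K.GenInDeg s) (hπL : πL.IsCover s) :
    ∃ (PK PC : 𝒜.GMod) (πK : GHom PK K) (πC : GHom PC C) (φ : GHom PK PL)
      (hφ : πL.lin ∘ₗ φ.lin = i.lin ∘ₗ πK.lin) (ψ : GHom πL.ker πC.ker),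
      πK.IsCover s ∧ πC.IsCover s ∧ IsShortExact (GHom.kerMap πK πL φ i hφ).lin ψ.lin := by
  have hqπ : Function.Surjective (q.comp πL).lin := h.surjective.comp hπL.surjective
  obtain ⟨ε, hε⟩ := (q.comp πL).exists_isCoverIdem hπL.isProjGenInDeg hqπ
  obtain ⟨πK, hπK⟩ := h.exists_factor (πL.comp ε.kerι) <| LinearMap.ext fun x =>
    (hε.map_apply x.1).symm.trans (by rw [LinearMap.mem_ker.1 x.2, map_zero]; rfl)
  have cπK := h.isCover_of_isCoverIdem hK hπL hε hπK
  exact ⟨_, _, πK, _, _, hπK.symm, _, cπK, hε.isCover_range hπL.isProjGenInDeg hqπ,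
    ε.isShortExact_kerι_toRange.kerMap h hπK.symm (LinearMap.ext hε.map_apply) cπK.surjective⟩

theorem exists_extension [IsSemisimpleRing (𝒜.grading 0)] (h : IsShortExact i.lin q.lin)
    (hK : K.GenInDeg s) (hL : L.GenInDeg s) {S : Type} [AddCommGroup S] [Module 𝒜.A S]
    (hS : 𝒜.jideal ≤ Module.annihilator 𝒜.A S) (f : K.M →ₗ[𝒜.A] S) :
    ∃ g : L.M →ₗ[𝒜.A] S, g ∘ₗ i.lin = f := by
  have hi : Function.Injective (i.topMap s).lin := by
    rw [injective_iff_map_eq_zero]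
    rintro ⟨x⟩ hx
    have hx0 : K.proj s x = 0 := h.injective <| by
      rw [i.map_proj, hL.proj_eq_zero_of_mem_smul_top ((Submodule.Quotient.mk_eq_zero _).1 hx),
        map_zero]
    have hxt := hK.apply_proj (jideal_le_annihilator_quotient_smul_top K.M) hK.toTop.lin x
    exact hxt.symm.trans (by rw [hx0, map_zero])
  have := isSemisimpleModule_of_jideal_le_annihilator (𝒜 := 𝒜)
    (jideal_le_annihilator_quotient_smul_top L.M)
  obtain ⟨f', hf'⟩ := hK.exists_comp_toTop_eq hS f
  obtain ⟨g, hg⟩ := IsSemisimpleModule.extension_property _ hi f'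
  refine ⟨g ∘ₗ hL.toTop.lin, ?_⟩
  rw [LinearMap.comp_assoc, ← i.topMap_comp_toTop hK hL, ← LinearMap.comp_assoc, hg, hf']

end IsShortExact

/-- `X` is a retract of a finite power of `L`, by maps given in coordinates. -/
def GMod.IsRetractOfPow (X L : 𝒜.GMod) : Prop :=
  ∃ (m : ℕ) (u : Fin m → GHom X L) (v : Fin m → GHom L X),
    ∀ x, ∑ a, (v a).lin ((u a).lin x) = x

theorem GMod.IsRetractOfPow.refl (X : 𝒜.GMod) : X.IsRetractOfPow X :=
  ⟨1, fun _ => GHom.id X, fun _ => GHom.id X, by simp⟩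

theorem GMod.IsRetractOfPow.ker (h : X.IsRetractOfPow L) {π : GHom P X} (hπ : π.IsCover s)
    {ρ : GHom Q L} (hQ : Q.IsProjGenInDeg s) (hρ : Function.Surjective ρ.lin) :
    π.ker.IsRetractOfPow ρ.ker := by
  obtain ⟨m, u, v, huv⟩ := h
  choose U hU using fun a => hπ.isProjGenInDeg.exists_lift ((u a).comp π) ρ hρ
  choose V hV using fun a => hQ.exists_lift ((v a).comp ρ) π hπ.surjective
  have hπUV (x) : π.lin (∑ a, (V a).lin ((U a).lin x)) = π.lin x := by
    calc π.lin (∑ a, (V a).lin ((U a).lin x)) = ∑ a, (v a).lin (ρ.lin ((U a).lin x)) := by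
          rw [map_sum]
          exact Finset.sum_congr rfl fun a _ => LinearMap.congr_fun (hV a) _
      _ = ∑ a, (v a).lin ((u a).lin (π.lin x)) :=
          Finset.sum_congr rfl fun a _ => congrArg (v a).lin (LinearMap.congr_fun (hU a) x)
      _ = π.lin x := huv _
  have hUV : ∑ a, (V a).lin ∘ₗ (U a).lin = LinearMap.id :=
    hπ.isProjGenInDeg.genInDeg.linearMap_ext fun x hx => by
      rw [LinearMap.id_apply, LinearMap.sum_apply, ← sub_eq_zero]
      refine hπ.eq_zero _ (Submodule.sub_mem _ (Submodule.sum_mem _ fun a _ => ?_) hx) ?_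
      · exact (V a).grad _ _ ((U a).grad _ _ hx)
      · rw [map_sub, sub_eq_zero]
        exact hπUV x
  refine ⟨m, fun a => GHom.kerMap π ρ (U a) (u a) (hU a),
    fun a => GHom.kerMap ρ π (V a) (v a) (hV a), fun x => Subtype.ext ?_⟩
  have := LinearMap.congr_fun hUV x.1
  rw [LinearMap.sum_apply] at this
  exact (AddSubmonoidClass.coe_finsetSum _ _).trans this

end Covers

section DeltaKoszul

variable {F : Type} [Field F] {𝒜 : GradedAlg F}

/-- `X` has a resolution by finitely generated graded projectives whose `n`-th term is generated
in degree `e n`. This is the greatest predicate `C` such that `C e X` provides a surjection onto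
`X` from such a projective generated in degree `e 0`, whose kernel satisfies `C` with `e`
shifted by one. -/
def GMod.IsDeltaKoszul (e : ℕ → ℤ) (X : 𝒜.GMod) : Prop :=
  ∃ C : (ℕ → ℤ) → 𝒜.GMod → Prop, C e X ∧ ∀ e X, C e X →
    ∃ (P : 𝒜.GMod) (π : GHom P X), Function.Surjective π.lin ∧ P.IsProjGenInDeg (e 0) ∧
      C (fun n => e (n + 1)) π.ker

variable {e : ℕ → ℤ} {X L : 𝒜.GMod}

theorem MinRes.isDeltaKoszul (R : MinRes X) (h : ∀ n, (R.P n).GenInDeg (e n)) :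
    X.IsDeltaKoszul e := by
  refine ⟨fun e' X => ∃ (n : ℕ) (π : GHom (R.P n) X), Function.Surjective π.lin ∧
    LinearMap.range (R.d n).lin = LinearMap.ker π.lin ∧ e' = fun m => e (n + m),
    ⟨0, R.aug, R.aug_surj, R.exact_aug, by simp⟩, ?_⟩
  rintro _ X ⟨n, π, hπ, hd, rfl⟩
  refine ⟨R.P n, π, hπ, ⟨R.fg n, R.projective n, h n⟩, n + 1,
    ⟨(R.d n).lin.codRestrict (LinearMap.ker π.lin) fun x => hd ▸ ⟨x, rfl⟩, (R.d n).grad⟩,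
    ?_, ?_, ?_⟩
  · rintro ⟨x, hx⟩
    obtain ⟨y, rfl⟩ := hd ▸ hx
    exact ⟨y, rfl⟩
  · rw [R.exact n, LinearMap.ker_codRestrict]
  · exact funext fun m => congrArg e (by ring)

namespace GMod.IsDeltaKoszul

theorem exists_surjective (h : X.IsDeltaKoszul e) :
    ∃ (P : 𝒜.GMod) (π : GHom P X), Function.Surjective π.lin ∧ P.IsProjGenInDeg (e 0) ∧
      π.ker.IsDeltaKoszul (fun n => e (n + 1)) := by
  obtain ⟨C, h, hC⟩ := h
  obtain ⟨P, π, hπ, hP, hK⟩ := hC _ _ h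
  exact ⟨P, π, hπ, hP, C, hK, hC⟩

theorem genInDeg (h : X.IsDeltaKoszul e) : X.GenInDeg (e 0) := by
  obtain ⟨P, π, hπ, hP, -⟩ := h.exists_surjective
  exact π.genInDeg_of_surjective hπ hP.genInDeg

theorem finite (h : X.IsDeltaKoszul e) : Module.Finite 𝒜.A X.M := by
  obtain ⟨P, π, hπ, hP, -⟩ := h.exists_surjective
  have := hP.finite
  exact Module.Finite.of_surjective π.lin hπ

theorem exists_isCover (h : X.IsDeltaKoszul e) (he : StrictMono e) :
    ∃ (P : 𝒜.GMod) (π : GHom P X),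
      π.IsCover (e 0) ∧ π.ker.IsDeltaKoszul (fun n => e (n + 1)) := by
  obtain ⟨P, π, hπ, hP, hK⟩ := h.exists_surjective
  refine ⟨P, π, ⟨hP, hπ, fun x hx hx0 => ?_⟩, hK⟩
  have := hK.genInDeg.proj_eq_zero (he zero_lt_one) ⟨x, hx0⟩
  rw [π.ker.proj_of_mem (show _ ∈ π.ker.grading _ from hx)] at this
  exact congrArg Subtype.val this

theorem shift (h : X.IsDeltaKoszul e) (t : ℤ) :
    (X.shift t).IsDeltaKoszul (fun n => e n + t) := by
  refine ⟨fun e X => ∃ e' L, GMod.IsDeltaKoszul e' L ∧ X = L.shift t ∧ e = fun n => e' n + t,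
    ⟨e, X, h, rfl, rfl⟩, ?_⟩
  rintro _ _ ⟨e, X, h, rfl, rfl⟩
  obtain ⟨Q, ρ, hρ, hQ, hK⟩ := h.exists_surjective
  exact ⟨Q.shift t, ρ.shift t, hρ, hQ.shift t, _, _, hK, rfl, rfl⟩

end GMod.IsDeltaKoszul

theorem strictMono_tail (he : StrictMono e) : StrictMono fun n => e (n + 1) :=
  he.comp fun _ _ h => Nat.succ_lt_succ h

variable [IsSemisimpleRing (𝒜.grading 0)]

namespace GMod.IsDeltaKoszul

theorem of_isRetractOfPow (h : L.IsDeltaKoszul e) (hX : X.IsRetractOfPow L) :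
    X.IsDeltaKoszul e := by
  refine ⟨fun e X => ∃ L : 𝒜.GMod, L.IsDeltaKoszul e ∧ X.IsRetractOfPow L, ⟨L, h, hX⟩, ?_⟩
  rintro e X ⟨L, h, hX⟩
  obtain ⟨Q, ρ, hρ, hQ, hK⟩ := h.exists_surjective
  obtain ⟨m, u, v, huv⟩ := id hX
  obtain ⟨P, π, hπ⟩ := GHom.exists_isCover (hQ.pow m) (GHom.powDesc fun a => (v a).comp ρ)
    (GHom.powDesc_surjective fun x => by
      choose y hy using fun a => hρ ((u a).lin x)
      exact ⟨y, by simpa [hy] using huv x⟩)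
  exact ⟨P, π, hπ.surjective, hπ.isProjGenInDeg, _, hK, hX.ker hπ hQ hρ⟩

theorem ker (h : X.IsDeltaKoszul e) {P : 𝒜.GMod} {π : GHom P X} (hπ : π.IsCover (e 0)) :
    π.ker.IsDeltaKoszul (fun n => e (n + 1)) := by
  obtain ⟨Q, ρ, hρ, hQ, hK⟩ := h.exists_surjective
  exact hK.of_isRetractOfPow ((GMod.IsRetractOfPow.refl X).ker hπ hQ hρ)

end GMod.IsDeltaKoszul

theorem IsShortExact.isDeltaKoszul {K C : 𝒜.GMod} {i : GHom K L} {q : GHom L C}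
    (h : IsShortExact i.lin q.lin) (he : StrictMono e) (hK : K.IsDeltaKoszul e)
    (hL : L.IsDeltaKoszul e) : C.IsDeltaKoszul e := by
  refine ⟨fun e C => StrictMono e ∧ ∃ (K L : 𝒜.GMod) (i : GHom K L) (q : GHom L C),
    IsShortExact i.lin q.lin ∧ K.IsDeltaKoszul e ∧ L.IsDeltaKoszul e,
    ⟨he, K, L, i, q, h, hK, hL⟩, ?_⟩
  rintro e C ⟨he, K, L, i, q, h, hK, hL⟩
  obtain ⟨PL, πL, cL, hΩL⟩ := hL.exists_isCover he
  obtain ⟨PK, PC, πK, πC, φ, hφ, ψ, cK, cC, hφψ⟩ := h.exists_kernels hK.genInDeg cL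
  exact ⟨PC, πC, cC.surjective, cC.isProjGenInDeg, strictMono_tail he,
    _, _, _, _, hφψ, hK.ker cK, hΩL⟩

variable {T : 𝒜.GMod} (hT : IsTrivialGMod T)

include hT

theorem IsTrivialGMod.exists_sum_comp_eq_id {S : Type} [AddCommGroup S] [Module 𝒜.A S]
    [Module.Finite 𝒜.A S] (hS : 𝒜.jideal ≤ Module.annihilator 𝒜.A S) :
    ∃ (m : ℕ) (u : Fin m → (S →ₗ[𝒜.A] T.M)) (v : Fin m → (T.M →ₗ[𝒜.A] S)),
      ∀ x, ∑ a, v a (u a x) = x := by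
  obtain ⟨ι⟩ := hT.2
  obtain ⟨m, y, hy⟩ := Module.Finite.exists_fin (R := 𝒜.A) (M := S)
  let v (a : Fin m) : T.M →ₗ[𝒜.A] S :=
    Submodule.liftQ 𝒜.jideal (LinearMap.toSpanSingleton 𝒜.A S (y a)) (fun b hb => by
      simpa using Module.mem_annihilator.1 (hS hb) (y a)) ∘ₗ ι.toLinearMap
  have hv (a) : v a (ι.symm (Submodule.Quotient.mk 1)) = y a := by
    simp only [v, LinearMap.comp_apply, LinearEquiv.coe_coe, LinearEquiv.apply_symm_apply]
    exact one_smul 𝒜.A (y a)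
  let V : (Fin m → T.M) →ₗ[𝒜.A] S := ∑ a, v a ∘ₗ LinearMap.proj a
  have hV : Function.Surjective V := by
    rw [← LinearMap.range_eq_top, eq_top_iff, ← hy, Submodule.span_le]
    rintro _ ⟨a, rfl⟩
    refine ⟨Pi.single a (ι.symm (Submodule.Quotient.mk 1)), ?_⟩
    simp only [V, LinearMap.sum_apply, LinearMap.comp_apply, LinearMap.proj_apply]
    rw [Finset.sum_eq_single_of_mem a (Finset.mem_univ a) fun b _ hb => by
      rw [Pi.single_eq_of_ne hb, map_zero], Pi.single_eq_same, hv]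
  have := isSemisimpleModule_of_jideal_le_annihilator (𝒜 := 𝒜) hT.jideal_le_annihilator
  obtain ⟨u, hu⟩ := IsSemisimpleModule.lifting_property V hV LinearMap.id
  exact ⟨m, fun a => LinearMap.proj a ∘ₗ u, v, fun x => by simpa [V] using LinearMap.congr_fun hu x⟩

theorem IsTrivialGMod.isRetractOfPow_concentrated {S : Type} [AddCommGroup S] [Module F S]
    [Module 𝒜.A S] [IsScalarTower F 𝒜.A S] [SMulCommClass 𝒜.A F S] [Module.Finite 𝒜.A S]
    (hS : 𝒜.jideal ≤ Module.annihilator 𝒜.A S) (s : ℤ) :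
    (GMod.concentrated S hS s).IsRetractOfPow (T.shift s) := by
  obtain ⟨m, u, v, huv⟩ := hT.exists_sum_comp_eq_id hS
  refine ⟨m, fun a => ⟨u a, fun j x hx => ?_⟩, fun a => ⟨v a, fun j x hx => ?_⟩, huv⟩
  · obtain rfl | hj := eq_or_ne j s
    · simp [hT.grading_zero]
    · rw [GMod.mem_concentrated_grading.1 hx hj, map_zero]
      exact Submodule.zero_mem _
  · refine GMod.mem_concentrated_grading.2 fun hj => ?_
    have hx0 : x = 0 := by simpa [hT.1 (j - s) (by omega)] using hx
    rw [hx0, map_zero]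

variable {M : 𝒜.GMod} {s : ℤ}

theorem GMod.IsDeltaKoszul.top (hTe : T.IsDeltaKoszul e) [Module.Finite 𝒜.A M.M] :
    (M.top s).IsDeltaKoszul (fun n => e n + s) :=
  (hTe.shift s).of_isRetractOfPow (hT.isRetractOfPow_concentrated _ s)

/-- The radical `JM` of a δ-Koszul module is the quotient of the radical of a projective cover
`P → M`, the first syzygy of `M / JM`, by the first syzygy of `M`. -/
theorem GMod.IsDeltaKoszul.ker_toTop (he : StrictMono e) (he0 : e 0 = 0)
    (hTe : T.IsDeltaKoszul e) (hM : M.IsDeltaKoszul (fun n => e n + s)) (hMs : M.GenInDeg s) :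
    ∃ (P : 𝒜.GMod) (π : GHom P M), Module.Projective 𝒜.A P.M ∧ Function.Surjective π.lin ∧
      π.ker.IsDeltaKoszul (fun n => e (n + 1) + s) ∧
      (hMs.toTop.comp π).ker.IsDeltaKoszul (fun n => e (n + 1) + s) ∧
      hMs.toTop.ker.IsDeltaKoszul (fun n => e (n + 1) + s) := by
  have he' : StrictMono fun n => e n + s := he.add_const s
  obtain ⟨P, π, cπ, hK⟩ := hM.exists_isCover he'
  have := hM.finite
  have hP : (hMs.toTop.comp π).ker.IsDeltaKoszul (fun n => e (n + 1) + s) := by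
    refine (hTe.top hT).ker (π := hMs.toTop.comp π)
      ⟨cπ.isProjGenInDeg, hMs.toTop_surjective.comp cπ.surjective, fun x hx h => ?_⟩
    refine cπ.eq_zero x hx (hMs.eq_zero_of_mkQ_eq_zero ?_ h)
    simpa [he0] using π.grad _ _ hx
  exact ⟨P, π, cπ.isProjGenInDeg.projective, cπ.surjective, hK, hP,
    (isShortExact_kerMap_comp π hMs.toTop cπ.surjective).isDeltaKoszul
      (strictMono_tail he') hK hP⟩

end DeltaKoszul

/-! ### Yoneda Ext groups of modules -/

section ModuleExt

open CategoryTheory CategoryTheory.Abelian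

/-- The group `Ext^n(X, Y)` of two `A`-modules, with values in `Type`. -/
abbrev ModuleExt (A : Type) [Ring A] (X Y : Type) [AddCommGroup X] [Module A X] [AddCommGroup Y]
    [Module A Y] (n : ℕ) : Type :=
  Ext.{0} (ModuleCat.of A X) (ModuleCat.of A Y) n

variable {A : Type} [Ring A] {K L C K' L' C' X Y Z : Type}
  [AddCommGroup K] [Module A K] [AddCommGroup L] [Module A L] [AddCommGroup C] [Module A C]
  [AddCommGroup K'] [Module A K'] [AddCommGroup L'] [Module A L'] [AddCommGroup C'] [Module A C']
  [AddCommGroup X] [Module A X] [AddCommGroup Y] [Module A Y] [AddCommGroup Z] [Module A Z]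

/-- Linear maps as Ext classes of degree zero. -/
def extOfHom : (X →ₗ[A] Y) ≃+ ModuleExt A X Y 0 :=
  (ModuleCat.homAddEquiv (M := .of A X) (N := .of A Y)).symm.trans Ext.addEquiv₀.symm

theorem extOfHom_apply (f : X →ₗ[A] Y) : extOfHom f = Ext.mk₀ (ModuleCat.ofHom f) :=
  rfl

theorem extOfHom_comp (f : X →ₗ[A] Y) (g : Y →ₗ[A] Z) :
    (extOfHom f).comp (extOfHom g) (zero_add 0) = extOfHom (g ∘ₗ f) := by
  simp only [extOfHom_apply, Ext.mk₀_comp_mk₀, ModuleCat.ofHom_comp]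

theorem extOfHom_comp_assoc (f : X →ₗ[A] Y) (g : Y →ₗ[A] Z) {n : ℕ} (x : ModuleExt A Z C n) :
    (extOfHom f).comp ((extOfHom g).comp x (zero_add n)) (zero_add n) =
      (extOfHom (g ∘ₗ f)).comp x (zero_add n) := by
  rw [← extOfHom_comp, Ext.comp_assoc_of_second_deg_zero]

theorem extOfHom_id_comp {n : ℕ} (x : ModuleExt A X Y n) :
    (extOfHom LinearMap.id).comp x (zero_add n) = x :=
  Ext.mk₀_id_comp x

theorem comp_extOfHom_id {n : ℕ} (x : ModuleExt A X Y n) :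
    x.comp (extOfHom LinearMap.id) (add_zero n) = x :=
  Ext.comp_mk₀_id x

theorem ModuleExt.eq_zero_of_projective [h : Module.Projective A X] {n : ℕ}
    (x : ModuleExt A X Y (n + 1)) : x = 0 :=
  have : Projective (ModuleCat.of A X) := (IsProjective.iff_projective X).1 h
  Ext.eq_zero_of_projective x

namespace IsShortExact

variable {i : K →ₗ[A] L} {q : L →ₗ[A] C} {i' : K' →ₗ[A] L'} {q' : L' →ₗ[A] C'}

theorem comp_eq_zero (h : IsShortExact i q) : q ∘ₗ i = 0 :=
  LinearMap.ext h.exact.apply_apply_eq_zero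

theorem shortExact (h : IsShortExact i q) : (ShortComplex.mk (ModuleCat.ofHom i)
    (ModuleCat.ofHom q) (ModuleCat.hom_ext h.comp_eq_zero)).ShortExact where
  exact := (ShortComplex.ShortExact.moduleCat_exact_iff_function_exact _).2 h.exact
  mono_f := (ModuleCat.mono_iff_injective _).2 h.injective
  epi_g := (ModuleCat.epi_iff_surjective _).2 h.surjective

/-- The class in `Ext¹` of a short exact sequence. -/
def extClass (h : IsShortExact i q) : ModuleExt A C K 1 :=
  h.shortExact.extClass

theorem extClass_naturality (h : IsShortExact i q) (h' : IsShortExact i' q') {a : K →ₗ[A] K'}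
    {b : L →ₗ[A] L'} {c : C →ₗ[A] C'} (hi : b ∘ₗ i = i' ∘ₗ a) (hq : q' ∘ₗ b = c ∘ₗ q) :
    h.extClass.comp (extOfHom a) (add_zero 1) = (extOfHom c).comp h'.extClass (zero_add 1) :=
  ShortComplex.ShortExact.extClass_naturality h.shortExact h'.shortExact
    { τ₁ := ModuleCat.ofHom a
      τ₂ := ModuleCat.ofHom b
      τ₃ := ModuleCat.ofHom c
      comm₁₂ := ModuleCat.hom_ext hi.symm
      comm₂₃ := ModuleCat.hom_ext hq }

variable (h : IsShortExact i q) {n m : ℕ} (hn : 1 + n = m)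
include h

theorem exists_comp_eq_of_extClass_comp_eq_zero (x : ModuleExt A K Y n)
    (hx : h.extClass.comp x hn = 0) :
    ∃ y : ModuleExt A L Y n, (extOfHom i).comp y (zero_add n) = x :=
  Ext.contravariant_sequence_exact₁ h.shortExact _ x hn hx

theorem exists_extClass_comp_eq_of_comp_eq_zero (x : ModuleExt A C Y m)
    (hx : (extOfHom q).comp x (zero_add m) = 0) :
    ∃ y : ModuleExt A K Y n, h.extClass.comp y hn = x :=
  Ext.contravariant_sequence_exact₃ h.shortExact _ x hx hn

theorem comp_extClass_comp (x : ModuleExt A K Y n) :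
    (extOfHom q).comp (h.extClass.comp x hn) (zero_add m) = 0 :=
  ShortComplex.ShortExact.comp_extClass_assoc h.shortExact x hn

theorem extClass_comp_surjective [Module.Projective A L] :
    Function.Surjective fun y : ModuleExt A K Y n => h.extClass.comp y hn := fun x => by
  obtain rfl : m = n + 1 := by omega
  exact h.exists_extClass_comp_eq_of_comp_eq_zero hn x (ModuleExt.eq_zero_of_projective _)

theorem extClass_comp_bijective [Module.Projective A L] (hi : ∀ f : L →ₗ[A] Y, f ∘ₗ i = 0) :
    Function.Bijective fun y : ModuleExt A K Y n => h.extClass.comp y hn := by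
  refine ⟨(injective_iff_map_eq_zero (h.extClass.precomp (ModuleCat.of A Y) hn)).2 fun x hx => ?_,
    h.extClass_comp_surjective hn⟩
  obtain ⟨y, rfl⟩ := h.exists_comp_eq_of_extClass_comp_eq_zero hn x hx
  cases n with
  | zero =>
    obtain ⟨f, rfl⟩ := extOfHom.surjective y
    rw [extOfHom_comp, hi, map_zero]
  | succ n => rw [ModuleExt.eq_zero_of_projective y, Ext.comp_zero]

theorem extClass_comp_injective
    (hq : Function.Surjective fun y : ModuleExt A C Y n => (extOfHom q).comp y (zero_add n)) :
    Function.Injective fun y : ModuleExt A K Y n => h.extClass.comp y hn := by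
  refine (injective_iff_map_eq_zero (h.extClass.precomp (ModuleCat.of A Y) hn)).2 fun x hx => ?_
  obtain ⟨y, rfl⟩ := h.exists_comp_eq_of_extClass_comp_eq_zero hn x hx
  obtain ⟨z, rfl⟩ := hq y
  rw [extOfHom_comp_assoc, h.comp_eq_zero, map_zero, Ext.zero_comp]

/-- For a morphism `(a, b, c)` of short exact sequences whose source has projective middle term,
surjectivity of `a` on `Ext^n` gives surjectivity of `c` on `Ext^{n+1}`. -/
theorem extOfHom_comp_surjective_succ [Module.Projective A L] (h' : IsShortExact i' q')
    {a : K →ₗ[A] K'} {b : L →ₗ[A] L'} {c : C →ₗ[A] C'} (hi : b ∘ₗ i = i' ∘ₗ a)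
    (hq : q' ∘ₗ b = c ∘ₗ q)
    (ha : Function.Surjective fun y : ModuleExt A K' Y n => (extOfHom a).comp y (zero_add n)) :
    Function.Surjective fun y : ModuleExt A C' Y (n + 1) =>
      (extOfHom c).comp y (zero_add (n + 1)) := fun x => by
  obtain ⟨z, rfl⟩ := h.extClass_comp_surjective (add_comm 1 n) x
  obtain ⟨w, rfl⟩ := ha z
  refine ⟨h'.extClass.comp w (add_comm 1 n), ?_⟩
  simp only
  rw [← Ext.comp_assoc (a₁₂ := 1) _ _ _ (zero_add 1) (by omega) (by omega),
    ← h.extClass_naturality h' hi hq, Ext.comp_assoc_of_second_deg_zero]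

end IsShortExact

theorem extOfHom_comp_zero_injective {f : X →ₗ[A] Y} (hf : Function.Surjective f) :
    Function.Injective fun z : ModuleExt A Y Z 0 => (extOfHom f).comp z (zero_add 0) := by
  intro x y hxy
  obtain ⟨g, rfl⟩ := extOfHom.surjective x
  obtain ⟨k, rfl⟩ := extOfHom.surjective y
  simp only [extOfHom_comp] at hxy
  exact congrArg extOfHom ((LinearMap.cancel_right hf).1 (extOfHom.injective hxy))

end ModuleExt

section DeltaKoszulExt

open CategoryTheory.Abelian

variable {F : Type} [Field F] {𝒜 : GradedAlg F} {e : ℕ → ℤ}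

theorem GHom.isShortExact_kerι {P X : 𝒜.GMod} (π : GHom P X) (hπ : Function.Surjective π.lin) :
    IsShortExact π.kerι.lin π.lin where
  injective := Subtype.val_injective
  exact := LinearMap.exact_subtype_ker_map π.lin
  surjective := hπ

section

variable {S : Type} [AddCommGroup S] [Module 𝒜.A S] (hS : 𝒜.jideal ≤ Module.annihilator 𝒜.A S)
include hS

theorem IsShortExact.extOfHom_comp_surjective [IsSemisimpleRing (𝒜.grading 0)] (n : ℕ)
    (he : StrictMono e) {K L C : 𝒜.GMod} {i : GHom K L} {q : GHom L C}
    (h : IsShortExact i.lin q.lin) (hK : K.IsDeltaKoszul e) (hL : L.IsDeltaKoszul e) :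
    Function.Surjective fun y : ModuleExt 𝒜.A L.M S n =>
      (extOfHom i.lin).comp y (zero_add n) := by
  induction n generalizing e K L C with
  | zero =>
    intro x
    obtain ⟨f, rfl⟩ := extOfHom.surjective x
    obtain ⟨g, rfl⟩ := h.exists_extension hK.genInDeg hL.genInDeg hS f
    exact ⟨extOfHom g, extOfHom_comp _ _⟩
  | succ n ih =>
    obtain ⟨PL, πL, cL, hΩL⟩ := hL.exists_isCover he
    obtain ⟨PK, PC, πK, _, φ, hφ, ψ, cK, _, hφψ⟩ := h.exists_kernels hK.genInDeg cL
    have := cK.isProjGenInDeg.projective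
    exact (πK.isShortExact_kerι cK.surjective).extOfHom_comp_surjective_succ
      (πL.isShortExact_kerι cL.surjective) (a := (GHom.kerMap πK πL φ i hφ).lin) rfl hφ
      (ih (strictMono_tail he) hφψ (hK.ker cK) hΩL)

theorem GHom.comp_kerι_eq_zero {s : ℤ} {P X : 𝒜.GMod} {π : GHom P X} (hP : P.GenInDeg s)
    (hπ : ∀ x ∈ P.grading s, π.lin x = 0 → x = 0) (f : P.M →ₗ[𝒜.A] S) : f ∘ₗ π.kerι.lin = 0 :=
  LinearMap.ext fun x => by
    have hx : P.proj s x.1 = 0 := hπ _ (P.proj_mem _ _) <| by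
      rw [π.map_proj, LinearMap.mem_ker.1 x.2, map_zero]
    exact (hP.apply_proj hS f x.1).symm.trans (by rw [hx, map_zero]; rfl)

/-- The class of the first `r` steps of a minimal projective resolution, from `X` to its `r`-th
syzygy. -/
theorem GMod.IsDeltaKoszul.exists_syzygy_class (r : ℕ) (he : StrictMono e) {X : 𝒜.GMod}
    (hX : X.IsDeltaKoszul e) :
    ∃ (Y : 𝒜.GMod) (c : ModuleExt 𝒜.A X.M Y.M r), Y.IsDeltaKoszul (fun n => e (n + r)) ∧
      ∀ {n m : ℕ} (h : r + n = m),
        Function.Bijective fun y : ModuleExt 𝒜.A Y.M S n => c.comp y h := by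
  induction r generalizing e X with
  | zero =>
    refine ⟨X, extOfHom LinearMap.id, hX, fun {n m} h => ?_⟩
    obtain rfl : n = m := by omega
    simp only [extOfHom_id_comp]
    exact Function.bijective_id
  | succ r ih =>
    obtain ⟨P, π, cπ, hK⟩ := hX.exists_isCover he
    obtain ⟨Y, c, hY, hc⟩ := ih (strictMono_tail he) hK
    have := cπ.isProjGenInDeg.projective
    have hs := π.isShortExact_kerι cπ.surjective
    refine ⟨Y, hs.extClass.comp c (add_comm 1 r), hY, fun {n m} h => ?_⟩
    simp only [Ext.comp_assoc hs.extClass c _ (add_comm 1 r) rfl (by omega : 1 + r + n = m)]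
    exact (hs.extClass_comp_bijective (by omega) fun f =>
      GHom.comp_kerι_eq_zero hS cπ.isProjGenInDeg.genInDeg cπ.eq_zero f).comp (hc rfl)

end

variable [IsSemisimpleRing (𝒜.grading 0)] {T : 𝒜.GMod} (hT : IsTrivialGMod T) {M : 𝒜.GMod}
  {s : ℤ} (he : StrictMono e) (he0 : e 0 = 0) (hTe : T.IsDeltaKoszul e)
  (hM : M.IsDeltaKoszul (fun n => e n + s)) (hMs : M.GenInDeg s)
include hT he he0 hTe hM

theorem GMod.IsDeltaKoszul.toTop_ext_surjective (n : ℕ) :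
    Function.Surjective fun y : ModuleExt 𝒜.A (M.top s).M T.M n =>
      (extOfHom hMs.toTop.lin).comp y (zero_add n) := by
  cases n with
  | zero =>
    intro x
    obtain ⟨f, rfl⟩ := extOfHom.surjective x
    obtain ⟨g, rfl⟩ := hMs.exists_comp_toTop_eq hT.jideal_le_annihilator f
    exact ⟨extOfHom g, extOfHom_comp _ _⟩
  | succ n =>
    obtain ⟨P, π, hP, hπ, hKM, hKS, -⟩ := hTe.ker_toTop hT he he0 hM hMs
    refine (π.isShortExact_kerι hπ).extOfHom_comp_surjective_succ
      ((hMs.toTop.comp π).isShortExact_kerι (hMs.toTop_surjective.comp hπ))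
      (a := (GHom.kerMap π (hMs.toTop.comp π) (GHom.id P) hMs.toTop rfl).lin)
      (b := LinearMap.id) rfl rfl ?_
    exact (isShortExact_kerMap_comp π hMs.toTop hπ).extOfHom_comp_surjective
      hT.jideal_le_annihilator n ((strictMono_tail he).add_const s) hKM hKS

/-- With `JM` the radical of `M` and `N` its `(r-1)`-st syzygy, the long exact sequence of
`0 → JM → M → M/JM → 0` breaks up into `0 → Ext^n(N, T) → Ext^{n+r}(M/JM, T) → Ext^{n+r}(M, T)`. -/
theorem GMod.IsDeltaKoszul.exists_top_class {r : ℕ} (hr : 0 < r) {t : ℤ}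
    (het : ∀ n, e (n + r) = e n + t) :
    ∃ (N : 𝒜.GMod) (c : ModuleExt 𝒜.A (M.top s).M N.M r),
      N.IsDeltaKoszul (fun n => e n + (s + t)) ∧
      ∀ {n m : ℕ} (h : r + n = m),
        (Function.Injective fun y : ModuleExt 𝒜.A N.M T.M n => c.comp y h) ∧
        Function.Exact (fun y : ModuleExt 𝒜.A N.M T.M n => c.comp y h)
          (fun x => (extOfHom hMs.toTop.lin).comp x (zero_add m)) := by
  obtain ⟨r, rfl⟩ := Nat.exists_eq_add_one.2 hr
  obtain ⟨-, -, -, -, -, -, hJ⟩ := hTe.ker_toTop hT he he0 hM hMs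
  obtain ⟨N, c, hN, hc⟩ := hJ.exists_syzygy_class hT.jideal_le_annihilator r
    ((strictMono_tail he).add_const s)
  have hs := hMs.toTop.isShortExact_kerι hMs.toTop_surjective
  have hsurj := hTe.toTop_ext_surjective hT he he0 hM hMs
  refine ⟨N, hs.extClass.comp c (add_comm 1 r), ?_, fun {n m} h => ?_⟩
  · convert hN using 2 with n
    linarith [show e (n + r + 1) = e n + t from het n]
  simp only [Ext.comp_assoc hs.extClass c _ (add_comm 1 r) rfl (by omega : 1 + r + n = m)]
  refine ⟨(hs.extClass_comp_injective (by omega) (hsurj (r + n))).comp (hc rfl).1, fun x => ?_⟩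
  refine ⟨fun hx => ?_, ?_⟩
  · obtain ⟨y, rfl⟩ := hs.exists_extClass_comp_eq_of_comp_eq_zero (n := r + n) (by omega) x hx
    obtain ⟨z, rfl⟩ := (hc rfl).2 y
    exact ⟨z, rfl⟩
  · rintro ⟨y, rfl⟩
    exact hs.comp_extClass_comp (by omega) _

end DeltaKoszulExt

/-! ### Ext algebras and Ext modules -/

section ExtPieces

open CategoryTheory CategoryTheory.Abelian DirectSum

theorem ModuleExt.comp_heq_comp {A X Y Z : Type} [Ring A] [AddCommGroup X] [Module A X]
    [AddCommGroup Y] [Module A Y] [AddCommGroup Z] [Module A Z] {a b c c' : ℕ}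
    (x : ModuleExt A X Y a) (y : ModuleExt A Y Z b) (h : a + b = c) (h' : a + b = c') :
    x.comp y h ≍ x.comp y h' := by
  subst h h'
  rfl

/-- The group `Ext^{rn}_A(X, T)`, regarded as the component of degree `n` of a graded object. -/
def ExtPiece (A : Type) [Ring A] (r : ℕ) (X T : Type) [AddCommGroup X] [Module A X]
    [AddCommGroup T] [Module A T] (n : ℕ) : Type :=
  ModuleExt A X T (r * n)

namespace ExtPiece

variable {F A : Type} [Field F] [Ring A] [Algebra F A] {r : ℕ} {X Y T : Type}
  [AddCommGroup X] [Module A X] [AddCommGroup Y] [Module A Y] [AddCommGroup T] [Module A T]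

instance (n : ℕ) : AddCommGroup (ExtPiece A r X T n) :=
  inferInstanceAs (AddCommGroup (ModuleExt A X T (r * n)))

instance (n : ℕ) : Module F (ExtPiece A r X T n) :=
  inferInstanceAs (Module F (ModuleExt A X T (r * n)))

/-- The Yoneda product of `b ∈ Ext^{rm}(T, T)` and `x ∈ Ext^{rn}(X, T)`. Since `Ext.comp` composes
from left to right, the factors are interchanged. -/
def mul {m n : ℕ} (b : ExtPiece A r T T m) (x : ExtPiece A r X T n) : ExtPiece A r X T (m + n) :=
  Ext.comp (X := ModuleCat.of A X) (Y := ModuleCat.of A T) x b (by ring)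

/-- The class of the identity in `Ext^0(T, T)`. -/
def one : ExtPiece A r T T 0 :=
  extOfHom (LinearMap.id : T →ₗ[A] T)

theorem one_mul_heq {n : ℕ} (x : ExtPiece A r X T n) : mul one x ≍ x :=
  (ModuleExt.comp_heq_comp (a := r * n) (b := 0) x _ _ (add_zero _)).trans
    (heq_of_eq (comp_extOfHom_id x))

theorem mul_one_heq {n : ℕ} (x : ExtPiece A r T T n) : mul x one ≍ x :=
  (ModuleExt.comp_heq_comp (a := 0) (b := r * n) _ x _ (zero_add _)).trans
    (heq_of_eq (extOfHom_id_comp x))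

theorem mul_assoc_heq {l m n : ℕ} (x : ExtPiece A r T T l) (y : ExtPiece A r T T m)
    (z : ExtPiece A r X T n) : mul (mul x y) z ≍ mul x (mul y z) :=
  (heq_of_eq (Ext.comp_assoc (X := ModuleCat.of A X) (Y := ModuleCat.of A T)
    (Z := ModuleCat.of A T) (T := ModuleCat.of A T) (a₁ := r * n) (a₂ := r * m) (a₃ := r * l)
    (a₁₂ := r * (m + n)) (a₂₃ := r * (l + m)) z y x (by ring) (by ring) (by ring)).symm).trans
    (ModuleExt.comp_heq_comp (a := r * (m + n)) (b := r * l) _ _ _ _)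

protected theorem zero_mul {m n : ℕ} (x : ExtPiece A r X T n) :
    mul (0 : ExtPiece A r T T m) x = 0 :=
  Ext.comp_zero (X := ModuleCat.of A X) (Y := ModuleCat.of A T) (n := r * n) x
    (ModuleCat.of A T) (r * m) _ _

protected theorem mul_zero {m n : ℕ} (b : ExtPiece A r T T m) :
    mul b (0 : ExtPiece A r X T n) = 0 :=
  Ext.zero_comp (ModuleCat.of A X) (Y := ModuleCat.of A T) (Z := ModuleCat.of A T)
    (n := r * n) (m := r * m) b _ _

protected theorem mul_add {m n : ℕ} (b : ExtPiece A r T T m) (x y : ExtPiece A r X T n) :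
    mul b (x + y) = mul b x + mul b y :=
  Ext.add_comp (X := ModuleCat.of A X) (Y := ModuleCat.of A T) (Z := ModuleCat.of A T)
    (n := r * n) (m := r * m) x y b _

protected theorem add_mul {m n : ℕ} (b c : ExtPiece A r T T m) (x : ExtPiece A r X T n) :
    mul (b + c) x = mul b x + mul c x :=
  Ext.comp_add (X := ModuleCat.of A X) (Y := ModuleCat.of A T) (Z := ModuleCat.of A T)
    (n := r * n) (m := r * m) x b c _

theorem smul_mul (s : F) {m n : ℕ} (b : ExtPiece A r T T m) (x : ExtPiece A r X T n) :
    mul (s • b) x = s • mul b x :=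
  Ext.comp_smul (X := ModuleCat.of A X) (Y := ModuleCat.of A T) (Z := ModuleCat.of A T)
    (a := r * n) (b := r * m) x b _ s

protected theorem mul_smul (s : F) {m n : ℕ} (b : ExtPiece A r T T m) (x : ExtPiece A r X T n) :
    mul b (s • x) = s • mul b x :=
  Ext.smul_comp (X := ModuleCat.of A X) (Y := ModuleCat.of A T) (Z := ModuleCat.of A T)
    (a := r * n) (b := r * m) x b _ s

theorem smul_heq_smul (s : F) {m n : ℕ} (h : m = n) {x : ExtPiece A r X T m}
    {y : ExtPiece A r X T n} (hxy : x ≍ y) : s • x ≍ s • y := by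
  subst h
  rw [eq_of_heq hxy]

theorem smul_one_mul_heq (s : F) {n : ℕ} (x : ExtPiece A r X T n) :
    mul (s • (one : ExtPiece A r T T 0)) x ≍ s • x := by
  rw [smul_mul]
  exact smul_heq_smul s (zero_add n) (one_mul_heq x)

theorem mul_smul_one_heq (s : F) {n : ℕ} (x : ExtPiece A r T T n) :
    mul x (s • (one : ExtPiece A r T T 0)) ≍ s • x := by
  rw [ExtPiece.mul_smul]
  exact smul_heq_smul s (add_zero n) (mul_one_heq x)

instance : GradedMonoid.GMul (ExtPiece A r T T) where
  mul := mul

instance : GradedMonoid.GOne (ExtPiece A r T T) where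
  one := one

instance : GradedMonoid.GMonoid (ExtPiece A r T T) where
  one_mul a := Sigma.ext (zero_add a.1) (one_mul_heq a.2)
  mul_one a := Sigma.ext (add_zero a.1) (mul_one_heq a.2)
  mul_assoc a b c := Sigma.ext (add_assoc a.1 b.1 c.1) (mul_assoc_heq a.2 b.2 c.2)

instance : DirectSum.GRing (ExtPiece A r T T) where
  mul_zero a := ExtPiece.mul_zero a
  zero_mul b := ExtPiece.zero_mul b
  mul_add a b c := ExtPiece.mul_add a b c
  add_mul a b c := ExtPiece.add_mul a b c
  natCast n := n • one
  natCast_zero := zero_nsmul _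
  natCast_succ n := succ_nsmul _ n
  intCast n := n • one
  intCast_ofNat n := natCast_zsmul _ n
  intCast_negSucc_ofNat n := negSucc_zsmul _ n

instance : DirectSum.GAlgebra F (ExtPiece A r T T) where
  toFun := ((LinearMap.id (R := F)).smulRight (one : ExtPiece A r T T 0)).toAddMonoidHom
  map_one := one_smul _ _
  map_mul a b := Sigma.ext rfl <| by
    have h := (smul_one_mul_heq a (b • (one : ExtPiece A r T T 0))).symm
    rwa [smul_smul] at h
  commutes s x := Sigma.ext ((zero_add x.1).trans (add_zero x.1).symm)
    ((smul_one_mul_heq s x.2).trans (mul_smul_one_heq s x.2).symm)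
  smul_def s x := Sigma.ext (zero_add x.1).symm (smul_one_mul_heq s x.2).symm

instance : DirectSum.Gmodule (ExtPiece A r T T) (ExtPiece A r X T) where
  smul b x := mul b x
  one_smul a := Sigma.ext (zero_add a.1) (one_mul_heq a.2)
  mul_smul a b c := Sigma.ext (add_assoc a.1 b.1 c.1) (mul_assoc_heq a.2 b.2 c.2)
  smul_add a b c := ExtPiece.mul_add a b c
  smul_zero a := ExtPiece.mul_zero a
  add_smul a b c := ExtPiece.add_mul a b c
  zero_smul b := ExtPiece.zero_mul b

/-- Composition with a class in `Ext^{rq}(X, Y)`, as a map `Ext^{rn}(Y, T) → Ext^{r(n+q)}(X, T)`. -/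
def precomp {t q : ℕ} (c : ModuleExt A X Y t) (ht : t = r * q) (n : ℕ) :
    ExtPiece A r Y T n →ₗ[F] ExtPiece A r X T (n + q) where
  toFun y := Ext.comp (X := ModuleCat.of A X) (Y := ModuleCat.of A Y) (b := r * n) c y
    (by rw [ht]; ring)
  map_add' y z := Ext.comp_add (X := ModuleCat.of A X) (Y := ModuleCat.of A Y)
    (Z := ModuleCat.of A T) (n := t) (m := r * n) c y z _
  map_smul' s y := Ext.comp_smul (X := ModuleCat.of A X) (Y := ModuleCat.of A Y)
    (Z := ModuleCat.of A T) (a := t) (b := r * n) c y _ s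

theorem precomp_mul_heq {t q : ℕ} (c : ModuleExt A X Y t) (ht : t = r * q) {m n : ℕ}
    (b : ExtPiece A r T T m) (y : ExtPiece A r Y T n) :
    precomp (F := F) c ht (m + n) (mul b y) ≍ mul b (precomp (F := F) c ht n y) := by
  refine HEq.trans ?_ (heq_of_eq (Ext.comp_assoc (X := ModuleCat.of A X) (Y := ModuleCat.of A Y)
    (Z := ModuleCat.of A T) (T := ModuleCat.of A T) (a₁ := t) (a₂ := r * n) (a₃ := r * m)
    (a₁₂ := r * (n + q)) (a₂₃ := r * (m + n)) (a := r * (m + (n + q))) c y b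
    (by rw [ht]; ring) (by ring) (by rw [ht]; ring)).symm)
  exact ModuleExt.comp_heq_comp (a := t) (b := r * (m + n)) _ _ (by rw [ht]; ring) _

end ExtPiece

end ExtPieces

section ExtAlgebra

open CategoryTheory CategoryTheory.Abelian DirectSum

/-- The algebra `⨁ₙ Ext^{rn}_A(T, T)` with the Yoneda product. -/
abbrev ExtAlgebra (A : Type) [Ring A] (r : ℕ) (T : Type) [AddCommGroup T] [Module A T] : Type :=
  ⨁ n, ExtPiece A r T T n

/-- The module `⨁ₙ Ext^{rn}_A(X, T)` over `ExtAlgebra A r T`. It is not reducible to a direct sum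
because, for `X = T`, its module structure would then compete with the regular one. -/
def ExtModule (A : Type) [Ring A] (r : ℕ) (X T : Type) [AddCommGroup X] [Module A X]
    [AddCommGroup T] [Module A T] : Type :=
  ⨁ n, ExtPiece A r X T n

variable {F A : Type} [Field F] [Ring A] [Algebra F A] {r : ℕ} {X Y T : Type}
  [AddCommGroup X] [Module A X] [AddCommGroup Y] [Module A Y] [AddCommGroup T] [Module A T]

namespace ExtModule

instance : AddCommGroup (ExtModule A r X T) :=
  inferInstanceAs (AddCommGroup (⨁ n, ExtPiece A r X T n))

instance : Module F (ExtModule A r X T) :=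
  inferInstanceAs (Module F (⨁ n, ExtPiece A r X T n))

instance : Module (ExtAlgebra A r T) (ExtModule A r X T) :=
  Gmodule.module (ExtPiece A r T T) (ExtPiece A r X T)

variable (F) in
/-- The inclusion of the homogeneous component of degree `n`. -/
def of (n : ℕ) : ExtPiece A r X T n →ₗ[F] ExtModule A r X T :=
  lof F ℕ (ExtPiece A r X T) n

variable (F) in
/-- The homogeneous component of degree `n` of an element. -/
def component (n : ℕ) : ExtModule A r X T →ₗ[F] ExtPiece A r X T n :=
  DirectSum.component F ℕ (ExtPiece A r X T) n

theorem component_of (n : ℕ) (x : ExtPiece A r X T n) : component F n (of F n x) = x :=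
  component.lof_self F n x

theorem component_of_ne {m n : ℕ} (h : m ≠ n) (x : ExtPiece A r X T m) :
    component F n (of F m x) = 0 := by
  classical
  exact of_eq_of_ne _ _ _ h.symm

variable (F) in
theorem ext {x y : ExtModule A r X T} (h : ∀ n, component F n x = component F n y) : x = y :=
  DFinsupp.ext h

variable (F) in
theorem mem_of_forall_component (W : Submodule F (ExtModule A r X T)) {z : ExtModule A r X T}
    (h : ∀ n, of F n (component F n z) ∈ W) : z ∈ W := by
  classical
  have hz : ∑ n ∈ DFinsupp.support z, of F n (component F n z) = z := sum_support_of z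
  rw [← hz]
  exact W.sum_mem fun n _ => h n

variable (F) in
@[elab_as_elim]
theorem induction {p : ExtModule A r X T → Prop} (x : ExtModule A r X T) (zero : p 0)
    (homogeneous : ∀ n x, p (of F n x)) (add : ∀ x y, p x → p y → p (x + y)) : p x := by
  classical
  exact DirectSum.induction_on x zero homogeneous add

/-- The linear map with prescribed restrictions to the homogeneous components. -/
def desc {W : Type} [AddCommGroup W] [Module F W] (f : ∀ n, ExtPiece A r X T n →ₗ[F] W) :
    ExtModule A r X T →ₗ[F] W :=
  toModule F ℕ W f

theorem desc_of {W : Type} [AddCommGroup W] [Module F W] (f : ∀ n, ExtPiece A r X T n →ₗ[F] W)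
    (n : ℕ) (x : ExtPiece A r X T n) : desc f (of F n x) = f n x :=
  toModule_lof F n x

theorem directSum_of_smul_of {m n : ℕ} (b : ExtPiece A r T T m) (x : ExtPiece A r X T n) :
    DirectSum.of (ExtPiece A r T T) m b • of F n x = of F (m + n) (b.mul x) :=
  Gmodule.of_smul_of _ _ b x

theorem of_congr {m n : ℕ} (h : m = n) {x : ExtPiece A r X T m} {y : ExtPiece A r X T n}
    (hxy : x ≍ y) : of F m x = of F n y := by
  subst h
  rw [eq_of_heq hxy]

theorem map_smul_of_homogeneous {W : Type} [AddCommGroup W] [Module F W]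
    [Module (ExtAlgebra A r T) W] (f : ExtModule A r X T →ₗ[F] W)
    (hf : ∀ m n (b : ExtPiece A r T T m) (x : ExtPiece A r X T n),
      f (of F (m + n) (b.mul x)) = DirectSum.of (ExtPiece A r T T) m b • f (of F n x))
    (b : ExtAlgebra A r T) (x : ExtModule A r X T) : f (b • x) = b • f x := by
  classical
  induction b using DirectSum.induction_on with
  | zero => simp only [zero_smul, map_zero]
  | add b c hb hc => simp only [add_smul, map_add, hb, hc]
  | of m b =>
    induction x using induction F (A := A) with
    | zero => simp only [smul_zero, map_zero]
    | add x y hx hy => simp only [smul_add, map_add, hx, hy]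
    | homogeneous n x => rw [directSum_of_smul_of (F := F), hf]

theorem algebraMap_smul (s : F) (x : ExtModule A r X T) :
    algebraMap F (ExtAlgebra A r T) s • x = s • x := by
  induction x using induction F (A := A) with
  | zero => simp only [smul_zero]
  | add x y hx hy => simp only [smul_add, hx, hy]
  | homogeneous n x =>
    have h : algebraMap F (ExtAlgebra A r T) s =
        DirectSum.of (ExtPiece A r T T) 0 (s • ExtPiece.one) := rfl
    rw [h, directSum_of_smul_of (F := F), ← map_smul]
    exact of_congr (zero_add n) (ExtPiece.smul_one_mul_heq s x)

instance : IsScalarTower F (ExtAlgebra A r T) (ExtModule A r X T) :=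
  IsScalarTower.of_algebraMap_smul algebraMap_smul

instance : SMulCommClass (ExtAlgebra A r T) F (ExtModule A r X T) :=
  IsScalarTower.to_smulCommClass'

variable (F) in
/-- The identification of the Ext module of `T` with the regular module. -/
def equivExtAlgebra : ExtModule A r T T ≃ₗ[ExtAlgebra A r T] ExtAlgebra A r T where
  __ := LinearEquiv.refl F (⨁ n, ExtPiece A r T T n)
  map_smul' := map_smul_of_homogeneous
    (LinearEquiv.refl F (⨁ n, ExtPiece A r T T n)).toLinearMap
    fun _ _ b x => (of_mul_of b x).symm

theorem equivExtAlgebra_of (n : ℕ) (x : ExtPiece A r T T n) :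
    equivExtAlgebra F (of F n x) = DirectSum.of (ExtPiece A r T T) n x :=
  rfl

variable (F) in
/-- Composition with a class in `Ext^{rq}(X, Y)`, as a map of Ext modules of degree `q`. -/
def precomp {t q : ℕ} (c : ModuleExt A X Y t) (ht : t = r * q) :
    ExtModule A r Y T →ₗ[ExtAlgebra A r T] ExtModule A r X T where
  __ := desc fun n => of F (n + q) ∘ₗ ExtPiece.precomp (F := F) c ht n
  map_smul' := by
    refine map_smul_of_homogeneous
      (desc fun n => of F (n + q) ∘ₗ ExtPiece.precomp (F := F) c ht n) fun m n b y => ?_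
    rw [desc_of, desc_of, LinearMap.comp_apply, LinearMap.comp_apply,
      directSum_of_smul_of (F := F)]
    exact of_congr (add_assoc m n q) (ExtPiece.precomp_mul_heq (F := F) c ht b y)

section Precomp

variable {t q : ℕ} (c : ModuleExt A X Y t) (ht : t = r * q)

theorem precomp_of (n : ℕ) (y : ExtPiece A r Y T n) :
    precomp F c ht (of F n y) = of F (n + q) (ExtPiece.precomp (F := F) c ht n y) :=
  desc_of (fun n => of F (n + q) ∘ₗ ExtPiece.precomp (F := F) c ht n) n y

theorem component_precomp (n : ℕ) (z : ExtModule A r Y T) :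
    component F (n + q) (precomp F c ht z) =
      ExtPiece.precomp (F := F) c ht n (component F n z) := by
  induction z using induction F (A := A) with
  | zero => simp only [map_zero]
  | add x y hx hy => simp only [map_add, hx, hy]
  | homogeneous m y =>
    rw [precomp_of (F := F) c ht]
    obtain rfl | h := eq_or_ne m n
    · rw [component_of, component_of]
    · rw [component_of_ne h, component_of_ne (by omega), map_zero]

theorem component_precomp_of_lt {n : ℕ} (hn : n < q) (z : ExtModule A r Y T) :
    component F n (precomp F c ht z) = 0 := by
  induction z using induction F (A := A) with
  | zero => simp only [map_zero]
  | add x y hx hy => simp only [map_add, hx, hy, add_zero]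
  | homogeneous m y =>
    rw [precomp_of (F := F) c ht]
    exact component_of_ne (by omega) _

end Precomp

end ExtModule

end ExtAlgebra

section GradedExt

open CategoryTheory CategoryTheory.Abelian DirectSum

variable {F A : Type} [Field F] [Ring A] [Algebra F A] {r : ℕ} {X Y Z T : Type}
  [AddCommGroup X] [Module A X] [AddCommGroup Y] [Module A Y] [AddCommGroup Z] [Module A Z]
  [AddCommGroup T] [Module A T]

namespace ExtModule

theorem iSupIndep_range_of :
    iSupIndep fun n => LinearMap.range (of F n : ExtPiece A r X T n →ₗ[F] ExtModule A r X T) := by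
  refine iSupIndep_of_forall_proj _ (fun n => of F n ∘ₗ component F n) ?_ ?_
  · rintro n _ ⟨x, rfl⟩
    rw [LinearMap.comp_apply, component_of]
  · rintro m n hmn _ ⟨x, rfl⟩
    rw [LinearMap.comp_apply, component_of_ne hmn, map_zero]

theorem iSup_range_of :
    ⨆ n, LinearMap.range (of F n : ExtPiece A r X T n →ₗ[F] ExtModule A r X T) = ⊤ :=
  eq_top_iff.2 fun _ _ =>
    mem_of_forall_component F _ fun n => Submodule.mem_iSup_of_mem n (LinearMap.mem_range_self _ _)

end ExtModule

instance ExtAlgebra.gradedAlgebra :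
    GradedAlgebra fun n => LinearMap.range (lof F ℕ (ExtPiece A r T T) n) where
  __ := (isInternal_submodule_of_iSupIndep_of_iSup_eq_top
    (ExtModule.iSupIndep_range_of (X := T)) ExtModule.iSup_range_of).chooseDecomposition
  one_mem := ⟨ExtPiece.one, rfl⟩
  mul_mem := by
    rintro m n _ _ ⟨x, rfl⟩ ⟨y, rfl⟩
    exact ⟨x.mul y, (of_mul_of x y).symm⟩

variable (F A r T) in
/-- The Ext algebra `⨁ₙ Ext^{rn}_A(T, T)` as a graded algebra. -/
abbrev extGradedAlg : GradedAlg F where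
  A := ExtAlgebra A r T
  grading n := LinearMap.range (lof F ℕ (ExtPiece A r T T) n)

variable (F A r X T) in
/-- The Ext module `⨁ₙ Ext^{rn}_A(X, T)` as a graded module. -/
abbrev extGMod : (extGradedAlg F A r T).GMod where
  M := ExtModule A r X T
  grading
    | .ofNat n => LinearMap.range (ExtModule.of F n)
    | .negSucc _ => ⊥
  sup_eq_top := by
    rw [eq_top_iff, ← ExtModule.iSup_range_of]
    exact iSup_le fun n => le_iSup_of_le (Int.ofNat n) le_rfl
  indep := by
    refine iSupIndep_of_forall_proj _ (fun
      | .ofNat n => ExtModule.of F n ∘ₗ ExtModule.component F n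
      | .negSucc _ => 0) ?_ ?_
    · rintro (n | n) x hx
      · obtain ⟨x, rfl⟩ := hx
        exact congrArg (ExtModule.of F n) (ExtModule.component_of n x)
      · exact ((Submodule.mem_bot F).1 hx).symm
    · rintro (m | m) (n | n) hmn x hx
      · obtain ⟨x, rfl⟩ := hx
        rw [LinearMap.comp_apply, ExtModule.component_of_ne fun h => hmn (congrArg _ h), map_zero]
      · rfl
      · rw [(Submodule.mem_bot F).1 hx, map_zero]
      · rfl
  smul_mem {m j b x} hb hx := by
    obtain ⟨b, rfl⟩ := hb
    cases j with
    | ofNat n =>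
      obtain ⟨x, rfl⟩ := hx
      exact ⟨b.mul x, (ExtModule.directSum_of_smul_of (F := F) b x).symm⟩
    | negSucc n =>
      rw [(Submodule.mem_bot F).1 hx, smul_zero]
      exact Submodule.zero_mem _

theorem proj_extGMod (n : ℕ) (z : ExtModule A r X T) :
    (extGMod F A r X T).proj n z = ExtModule.of F n (ExtModule.component F n z) := by
  induction z using ExtModule.induction F (A := A) with
  | zero => simp only [map_zero]
  | add x y hx hy => simp only [map_add, hx, hy]
  | homogeneous m x =>
    have hx : ExtModule.of F m x ∈ (extGMod F A r X T).grading m := ⟨x, rfl⟩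
    obtain rfl | h := eq_or_ne m n
    · rw [GMod.proj_of_mem _ hx, ExtModule.component_of]
    · rw [GMod.proj_of_mem_ne _ hx (by omega), ExtModule.component_of_ne h, map_zero]

variable (F) in
/-- Composition with a class in `Ext^{rq}(X, Y)`, as a morphism of graded modules. -/
def extPrecomp (T : Type) [AddCommGroup T] [Module A T] {t q : ℕ} (c : ModuleExt A X Y t)
    (ht : t = r * q) : GHom ((extGMod F A r Y T).shift q) (extGMod F A r X T) where
  lin := ExtModule.precomp F c ht
  grad j x hx := by
    obtain ⟨k, rfl⟩ : ∃ k, j = k + q := ⟨j - q, by ring⟩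
    change x ∈ (extGMod F A r Y T).grading (k + q - q) at hx
    rw [add_sub_cancel_right] at hx
    cases k with
    | ofNat n =>
      obtain ⟨x, rfl⟩ := hx
      exact ⟨_, (ExtModule.precomp_of c ht n x).symm⟩
    | negSucc n =>
      rw [(Submodule.mem_bot F).1 hx, map_zero]
      exact Submodule.zero_mem _

variable (F r T) in
/-- Pullback along a linear map, as a morphism of graded modules. -/
def extMap (f : X →ₗ[A] Y) : GHom (extGMod F A r Y T) (extGMod F A r X T) where
  lin := ExtModule.precomp F (extOfHom f) (Nat.mul_zero r).symm
  grad j x hx := (extPrecomp F T (extOfHom f) (Nat.mul_zero r).symm).grad j x (by simpa using hx)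

theorem component_extMap (f : X →ₗ[A] Y) (n : ℕ) (z : ExtModule A r Y T) :
    ExtModule.component F n ((extMap F r T f).lin z) =
      (extOfHom f).comp (ExtModule.component F n z : ModuleExt A Y T (r * n)) (zero_add _) :=
  ExtModule.component_precomp (extOfHom f) _ n z

theorem sum_extMap_extMap {m : ℕ} {u : Fin m → (X →ₗ[A] T)} {v : Fin m → (T →ₗ[A] X)}
    (h : ∀ x, ∑ a, v a (u a x) = x) (z : ExtModule A r X T) :
    ∑ a, (extMap F r T (u a)).lin ((extMap F r T (v a)).lin z) = z := by
  refine ExtModule.ext F fun n => ?_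
  let zn : ModuleExt A X T (r * n) := ExtModule.component F n z
  have hva (a) : ExtModule.component F n ((extMap F r T (u a)).lin ((extMap F r T (v a)).lin z)) =
      (extOfHom (v a ∘ₗ u a)).comp zn (zero_add _) :=
    (component_extMap (u a) n _).trans ((congrArg (fun w : ModuleExt A T T (r * n) =>
      (extOfHom (u a)).comp w (zero_add _)) (component_extMap (v a) n z)).trans
      (extOfHom_comp_assoc _ _ _))
  have huv : ∑ a, v a ∘ₗ u a = LinearMap.id := LinearMap.ext fun x => by simpa using h x
  have hzn : (∑ a, extOfHom (v a ∘ₗ u a)).comp zn (zero_add _) = zn := by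
    rw [← map_sum, huv, extOfHom_id_comp]
  rw [map_sum, Finset.sum_congr rfl fun a _ => hva a]
  exact (Ext.sum_comp _ _ _).symm.trans hzn

theorem isProjGenInDeg_extGMod_self : (extGMod F A r T T).IsProjGenInDeg 0 where
  finite := Module.Finite.equiv (ExtModule.equivExtAlgebra F).symm
  projective := Module.Projective.of_equiv (ExtModule.equivExtAlgebra F).symm
  genInDeg := by
    rw [GMod.GenInDeg, eq_top_iff]
    intro z _
    have hz : z = ExtModule.equivExtAlgebra F z • ExtModule.of F 0 ExtPiece.one := by
      apply (ExtModule.equivExtAlgebra F).injective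
      rw [map_smul, ExtModule.equivExtAlgebra_of]
      exact (mul_one _).symm
    rw [hz]
    exact Submodule.smul_mem _ _ (Submodule.subset_span ⟨ExtPiece.one, rfl⟩)

theorem isProjGenInDeg_extGMod {m : ℕ} {u : Fin m → (X →ₗ[A] T)} {v : Fin m → (T →ₗ[A] X)}
    (h : ∀ x, ∑ a, v a (u a x) = x) : (extGMod F A r X T).IsProjGenInDeg 0 := by
  refine (isProjGenInDeg_extGMod_self.pow m).of_comp_eq_id
    (GHom.powDesc fun a => extMap F r T (u a))
    ⟨LinearMap.pi fun a => (extMap F r T (v a)).lin, fun j x hx a _ =>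
      (extMap F r T (v a)).grad j x hx⟩ (LinearMap.ext fun z => ?_)
  simpa [GHom.powDesc] using sum_extMap_extMap h z

section Exactness

variable {c : ModuleExt A X Y r}

theorem extPrecomp_injective
    (hc : ∀ {n m : ℕ} (h : r + n = m), Function.Injective fun y : ModuleExt A Y T n => c.comp y h) :
    Function.Injective (extPrecomp F T c (mul_one r).symm).lin := by
  rw [injective_iff_map_eq_zero]
  intro z hz
  refine ExtModule.ext F fun n => ?_
  rw [map_zero]
  refine hc (by ring : r + r * n = r * (n + 1)) ?_
  change _ = c.comp (0 : ModuleExt A Y T (r * n)) _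
  rw [Ext.comp_zero]
  have h := ExtModule.component_precomp (F := F) c (mul_one r).symm n z
  exact h.symm.trans ((congrArg (ExtModule.component F (n + 1)) hz).trans (map_zero _))

theorem mem_range_extPrecomp {z : ExtModule A r X T} :
    z ∈ LinearMap.range (extPrecomp F T c (mul_one r).symm).lin ↔
      ExtModule.component F 0 z = 0 ∧ ∀ n, ∃ y : ModuleExt A Y T (r * n),
        c.comp y (by ring : r + r * n = r * (n + 1)) = ExtModule.component F (n + 1) z := by
  constructor
  · rintro ⟨y, rfl⟩
    exact ⟨ExtModule.component_precomp_of_lt c _ Nat.one_pos y, fun n =>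
      ⟨ExtModule.component F n y, (ExtModule.component_precomp c _ n y).symm⟩⟩
  · rintro ⟨h0, h⟩
    refine ExtModule.mem_of_forall_component F
      ((LinearMap.range (extPrecomp F T c (mul_one r).symm).lin).restrictScalars F) fun n => ?_
    cases n with
    | zero =>
      rw [h0, map_zero]
      exact Submodule.zero_mem _
    | succ n =>
      obtain ⟨y, hy⟩ := h n
      exact ⟨ExtModule.of F n y,
        (ExtModule.precomp_of c _ n y).trans (congrArg (ExtModule.of F (n + 1)) hy)⟩

theorem extMap_surjective {π : X →ₗ[A] Y}
    (hπ : ∀ n, Function.Surjective fun y : ModuleExt A Y T n =>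
      (extOfHom π).comp y (zero_add n)) :
    Function.Surjective (extMap F r T π).lin := fun z => by
  refine ExtModule.mem_of_forall_component F
    ((LinearMap.range (extMap F r T π).lin).restrictScalars F) fun n => ?_
  obtain ⟨y, hy⟩ := hπ (r * n) (ExtModule.component F n z : ModuleExt A X T (r * n))
  exact ⟨ExtModule.of F n y,
    (ExtModule.precomp_of _ _ n y).trans (congrArg (ExtModule.of F n) hy)⟩

theorem isShortExact_extPrecomp_extMap {π : Z →ₗ[A] X} (hπ : Function.Surjective π)
    (hπext : ∀ n, Function.Surjective fun y : ModuleExt A X T n =>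
      (extOfHom π).comp y (zero_add n))
    (hc : ∀ {n m : ℕ} (h : r + n = m),
      (Function.Injective fun y : ModuleExt A Y T n => c.comp y h) ∧
      Function.Exact (fun y : ModuleExt A Y T n => c.comp y h)
        (fun x : ModuleExt A X T m => (extOfHom π).comp x (zero_add m))) :
    IsShortExact (extPrecomp F T c (mul_one r).symm).lin (extMap F r T π).lin where
  injective := extPrecomp_injective fun h => (hc h).1
  surjective := extMap_surjective hπext
  exact z := by
    rw [← LinearMap.coe_range, SetLike.mem_coe, mem_range_extPrecomp]
    have hcomp (n : ℕ) := component_extMap (F := F) (r := r) π n z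
    constructor
    · refine fun hz => ⟨?_, fun n => ((hc _).2 _).1 ?_⟩
      · refine extOfHom_comp_zero_injective hπ ?_
        have h0 := (hcomp 0).symm.trans ((congrArg _ hz).trans (map_zero _))
        exact h0.trans (Ext.comp_zero _ _ _ _ _).symm
      · exact (hcomp (n + 1)).symm.trans ((congrArg _ hz).trans (map_zero _))
    · rintro ⟨h0, h⟩
      refine ExtModule.ext F fun n => (hcomp n).trans ?_
      rw [map_zero]
      cases n with
      | zero => rw [h0]; exact Ext.comp_zero _ _ _ _ _
      | succ n => exact ((hc _).2 _).2 (h n)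

theorem isShortExact_extPrecomp_toTop {c : ModuleExt A T Y r}
    (hc : ∀ {n m : ℕ} (h : r + n = m),
      Function.Bijective fun y : ModuleExt A Y T n => c.comp y h) :
    IsShortExact (extPrecomp F T c (mul_one r).symm).lin
      (isProjGenInDeg_extGMod_self (F := F) (A := A) (r := r) (T := T)).genInDeg.toTop.lin where
  injective := extPrecomp_injective fun h => (hc h).1
  surjective := GMod.GenInDeg.toTop_surjective _
  exact z := by
    rw [← LinearMap.coe_range, SetLike.mem_coe, mem_range_extPrecomp]
    have hz : (extGMod F A r T T).proj 0 z = 0 ↔ ExtModule.component F 0 z = 0 := by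
      rw [← Nat.cast_zero, proj_extGMod]
      refine ⟨fun h => ?_, fun h => by rw [h, map_zero]⟩
      rw [← ExtModule.component_of (F := F) 0 (ExtModule.component F 0 z), h, map_zero]
    rw [GMod.GenInDeg.toTop_eq_zero_iff, hz]
    exact ⟨fun h => ⟨h, fun n => (hc _).2 _⟩, And.left⟩

end Exactness

end GradedExt

/-! ### Linear resolutions -/

section Koszul

open CategoryTheory CategoryTheory.Abelian

variable {F : Type} [Field F] {𝒜 : GradedAlg F}

/-- Minimality is automatic: the component of degree `e n` generates the `n`-th term, and the term
before it in the resolution vanishes in that degree. -/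
theorem MinRes.exists_of_isShortExact {e : ℕ → ℤ} (he : StrictMono e) {X P : ℕ → 𝒜.GMod}
    (i : ∀ n, GHom (X (n + 1)) (P n)) (π : ∀ n, GHom (P n) (X n))
    (hiπ : ∀ n, IsShortExact (i n).lin (π n).lin) (hP : ∀ n, (P n).IsProjGenInDeg (e n)) :
    ∃ R : MinRes (X 0), ∀ n, (R.P n).GenInDeg (e n) := by
  have hrange (n : ℕ) : LinearMap.range ((i n).comp (π (n + 1))).lin = LinearMap.ker (π n).lin := by
    rw [(hiπ n).exact.linearMap_ker_eq]
    exact LinearMap.range_comp_of_range_eq_top _ (LinearMap.range_eq_top.2 (hiπ (n + 1)).surjective)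
  exact ⟨{
    P := P
    d := fun n => (i n).comp (π (n + 1))
    aug := π 0
    fg := fun n => (hP n).finite
    projective := fun n => (hP n).projective
    aug_surj := (hiπ 0).surjective
    exact_aug := hrange 0
    exact := fun n => by
      rw [hrange (n + 1)]
      exact (LinearMap.ker_comp_of_ker_eq_bot _ (LinearMap.ker_eq_bot.2 (hiπ n).injective)).symm
    minimal := by
      rintro n _ ⟨x, rfl⟩
      rw [(hP n).genInDeg.mem_smul_top_iff, ← GHom.map_proj,
        (hP (n + 1)).genInDeg.proj_eq_zero (he n.lt_succ_self), map_zero] },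
    fun n => (hP n).genInDeg⟩

theorem GMod.IsDeltaKoszul.exists_minRes {e : ℕ → ℤ} (he : StrictMono e) {X : 𝒜.GMod}
    (hX : X.IsDeltaKoszul e) : ∃ R : MinRes X, ∀ n, (R.P n).GenInDeg (e n) := by
  have hstep (n : ℕ) (X : {X : 𝒜.GMod // X.IsDeltaKoszul fun m => e (n + m)}) :
      ∃ (P : 𝒜.GMod) (π : GHom P X.1), Function.Surjective π.lin ∧ P.IsProjGenInDeg (e n) ∧
        π.ker.IsDeltaKoszul fun m => e (n + 1 + m) := by
    simpa only [add_zero, add_assoc, add_comm 1] using X.2.exists_surjective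
  choose P π hπ hP hK using hstep
  let X' (n : ℕ) : {X : 𝒜.GMod // X.IsDeltaKoszul fun m => e (n + m)} :=
    Nat.rec ⟨X, by simpa only [Nat.zero_eq, zero_add] using hX⟩ (fun n Y => ⟨(π n Y).ker, hK n Y⟩) n
  exact MinRes.exists_of_isShortExact he (X := fun n => (X' n).1)
    (fun n => (π n (X' n)).kerι) (fun n => π n (X' n))
    (fun n => (π n (X' n)).isShortExact_kerι (hπ n (X' n))) (fun n => hP n (X' n))

theorem GMod.isDeltaKoszul_of_forall_isShortExact (D : 𝒜.GMod → Prop)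
    (hD : ∀ X, D X → ∃ (Y P : 𝒜.GMod) (i : GHom (Y.shift 1) P) (π : GHom P X),
      P.IsProjGenInDeg 0 ∧ IsShortExact i.lin π.lin ∧ D Y)
    {X : 𝒜.GMod} (hX : D X) : X.IsDeltaKoszul (fun n => (n : ℤ)) := by
  refine ⟨fun e X => ∃ (t : ℤ) (Y : 𝒜.GMod) (f : GHom (Y.shift t) X), D Y ∧
    Function.Bijective f.lin ∧ e = fun n : ℕ => (n : ℤ) + t,
    ⟨0, X, ⟨LinearMap.id, fun j x hx => by simpa using hx⟩, hX, Function.bijective_id, by simp⟩, ?_⟩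
  rintro _ X ⟨t, X, f, hX, hf, rfl⟩
  obtain ⟨Y, P, i, π, hP, hiπ, hY⟩ := hD X hX
  have hker (y : Y.M) : i.lin y ∈ LinearMap.ker (f.comp (π.shift t)).lin := by
    change f.lin (π.lin (i.lin y)) = 0
    rw [hiπ.exact.apply_apply_eq_zero, map_zero]
  refine ⟨P.shift t, f.comp (π.shift t), hf.surjective.comp hiπ.surjective, ?_, t + 1, Y,
    ⟨i.lin.codRestrict _ hker, fun j y hy => i.grad (j - t) y ?_⟩, hY, ⟨?_, ?_⟩, ?_⟩
  · simpa using hP.shift t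
  · simpa [sub_sub] using hy
  · exact fun y z h => hiπ.injective (congrArg Subtype.val h)
  · rintro ⟨x, hx⟩
    obtain ⟨y, hy⟩ := (hiπ.exact x).1 (hf.injective (hx.trans (map_zero _).symm))
    exact ⟨y, Subtype.ext hy⟩
  · funext n
    push_cast
    ring

theorem isTrivialGMod_top {X : 𝒜.GMod} (ε : X.M ≃ₗ[𝒜.A] 𝒜.A) : IsTrivialGMod (X.top 0) := by
  refine ⟨fun j hj => if_neg hj, ⟨Submodule.Quotient.equiv _ _ ε ?_⟩⟩
  rw [Submodule.map_smul'', Submodule.map_top, LinearEquiv.range]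
  exact Ideal.mul_top _

variable [IsSemisimpleRing (𝒜.grading 0)] {T : 𝒜.GMod} (hT : IsTrivialGMod T) {e : ℕ → ℤ}
  (he : StrictMono e) (he0 : e 0 = 0) (hTe : T.IsDeltaKoszul e) {r : ℕ} (hr : 0 < r) {t : ℤ}
  (het : ∀ n, e (n + r) = e n + t)

include hT he he0 hTe hr het

theorem GMod.IsDeltaKoszul.exists_extGMod_cover {M : 𝒜.GMod} {s : ℤ}
    (hM : M.IsDeltaKoszul fun n => e n + s) :
    ∃ (N : 𝒜.GMod) (i : GHom ((extGMod F 𝒜.A r N.M T.M).shift 1) (extGMod F 𝒜.A r (M.top s).M T.M))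
      (π : GHom (extGMod F 𝒜.A r (M.top s).M T.M) (extGMod F 𝒜.A r M.M T.M)),
      (extGMod F 𝒜.A r (M.top s).M T.M).IsProjGenInDeg 0 ∧ IsShortExact i.lin π.lin ∧
        N.IsDeltaKoszul fun n => e n + (s + t) := by
  have hMs : M.GenInDeg s := by simpa only [he0, zero_add] using hM.genInDeg
  obtain ⟨N, c, hN, hc⟩ := hTe.exists_top_class hT he he0 hM hMs hr het
  have := hM.finite
  obtain ⟨m, u, v, huv⟩ := hT.exists_sum_comp_eq_id (S := (M.top s).M)
    (jideal_le_annihilator_quotient_smul_top M.M)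
  exact ⟨N, extPrecomp F T.M c (mul_one r).symm, extMap F r T.M hMs.toTop.lin,
    isProjGenInDeg_extGMod huv,
    isShortExact_extPrecomp_extMap hMs.toTop_surjective
      (hTe.toTop_ext_surjective hT he he0 hM hMs) hc, hN⟩

theorem IsTrivialGMod.isKoszulMod_extGMod :
    (extGradedAlg F 𝒜.A r T.M).IsKoszulMod ((extGMod F 𝒜.A r T.M T.M).top 0) := by
  let D (X : (extGradedAlg F 𝒜.A r T.M).GMod) : Prop :=
    X = (extGMod F 𝒜.A r T.M T.M).top 0 ∨
      ∃ (M : 𝒜.GMod) (s : ℤ), M.IsDeltaKoszul (fun n => e n + s) ∧ X = extGMod F 𝒜.A r M.M T.M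
  refine (GMod.isDeltaKoszul_of_forall_isShortExact D ?_ (Or.inl rfl)).exists_minRes
    Nat.strictMono_cast
  rintro _ (rfl | ⟨M, s, hM, rfl⟩)
  · obtain ⟨Y, c, hY, hc⟩ := hTe.exists_syzygy_class hT.jideal_le_annihilator r he
    exact ⟨_, _, extPrecomp F T.M c (mul_one r).symm, _, isProjGenInDeg_extGMod_self,
      isShortExact_extPrecomp_toTop hc, Or.inr ⟨Y, t, by simpa only [het] using hY, rfl⟩⟩
  · obtain ⟨N, i, π, hP, hiπ, hN⟩ := hTe.exists_extGMod_cover hT he he0 hr het hM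
    exact ⟨_, _, i, π, hP, hiπ, Or.inr ⟨N, _, hN, rfl⟩⟩

end Koszul

/-! ### Comparison with Ext groups computed from a resolution -/

section ModuleExtLinear

open CategoryTheory.Abelian

variable {F A X Y Z : Type} [Field F] [Ring A] [Algebra F A] [AddCommGroup X] [Module A X]
  [AddCommGroup Y] [Module A Y] [AddCommGroup Z] [Module A Z]

theorem extOfHom_smul [Module F Y] [IsScalarTower F A Y] [SMulCommClass A F Y] (s : F)
    (f : X →ₗ[A] Y) : extOfHom (s • f) = s • extOfHom f := by
  simp only [extOfHom_apply, ← Ext.mk₀_smul]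
  congr 1
  ext x
  exact (algebraMap_smul A s (f x)).symm

theorem extOfHom_equiv_comp_bijective (w : X ≃ₗ[A] Y) (n : ℕ) :
    Function.Bijective fun y : ModuleExt A Y Z n =>
      (extOfHom w.toLinearMap).comp y (zero_add n) := by
  refine Function.bijective_iff_has_inverse.2
    ⟨fun x => (extOfHom w.symm.toLinearMap).comp x (zero_add n), fun x => ?_, fun x => ?_⟩ <;>
  simp only [extOfHom_comp_assoc, LinearEquiv.symm_comp, LinearEquiv.comp_symm, extOfHom_id_comp]

end ModuleExtLinear

namespace MinRes

open CategoryTheory.Abelian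

variable {F : Type} [Field F] {𝒜 : GradedAlg F} {M T : 𝒜.GMod} (R : MinRes M) {n : ℕ}

/-- The `n`-th syzygy of a resolution, as the cokernel of its differential `P_{n+1} → P_n`. -/
abbrev Syzygy (n : ℕ) : Type :=
  (R.P n).M ⧸ LinearMap.range (R.d n).lin

/-- The inclusion of the syzygy of degree `n + 1` into the term of degree `n`. -/
def syzygyι (n : ℕ) : R.Syzygy (n + 1) →ₗ[𝒜.A] (R.P n).M :=
  Submodule.liftQ _ (R.d n).lin (R.exact n).le

/-- The projection of the term of degree `n` onto the syzygy of degree `n`. -/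
abbrev toSyzygy (n : ℕ) : (R.P n).M →ₗ[𝒜.A] R.Syzygy n :=
  (LinearMap.range (R.d n).lin).mkQ

theorem isShortExact_syzygy (n : ℕ) : IsShortExact (R.syzygyι n) (R.toSyzygy n) where
  injective := LinearMap.ker_eq_bot.1 (Submodule.ker_liftQ_eq_bot _ _ _ (R.exact n).ge)
  exact := LinearMap.exact_iff.2 <| by
    rw [Submodule.ker_mkQ, syzygyι, Submodule.range_liftQ]
  surjective := Submodule.mkQ_surjective _

/-- The augmentation identifies the syzygy of degree zero with the resolved module. -/
def syzygyZeroEquiv : R.Syzygy 0 ≃ₗ[𝒜.A] M.M :=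
  (Submodule.quotEquivOfEq _ _ R.exact_aug).trans
    (R.aug.lin.quotKerEquivOfSurjective R.aug_surj)

theorem syzygyZeroEquiv_symm_aug (x : (R.P 0).M) :
    R.syzygyZeroEquiv.symm (R.aug.lin x) = R.toSyzygy 0 x :=
  (LinearEquiv.symm_apply_eq _).2 rfl

/-- The class in `Ext^n(M, Ω^n M)` of the first `n` steps of a resolution of `M`. -/
def syzygyClass : (n : ℕ) → ModuleExt 𝒜.A M.M (R.Syzygy n) n
  | 0 => extOfHom R.syzygyZeroEquiv.symm.toLinearMap
  | n + 1 => (syzygyClass n).comp (R.isShortExact_syzygy n).extClass rfl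

/-- The map on the syzygy induced by a cocycle. -/
def ofCocycle (f : cocyc T R n) : R.Syzygy n →ₗ[𝒜.A] T.M :=
  Submodule.liftQ _ f.1 (LinearMap.range_le_ker_iff.2 f.2)

variable (T) in
/-- The Ext class of a cocycle. -/
def cocycleClass (n : ℕ) : cocyc T R n →ₗ[F] ModuleExt 𝒜.A M.M T.M n where
  toFun f := (R.syzygyClass n).comp (extOfHom (R.ofCocycle f)) (add_zero n)
  map_add' f g := by
    have h : R.ofCocycle (f + g) = R.ofCocycle f + R.ofCocycle g :=
      Submodule.linearMap_qext _ rfl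
    rw [h, map_add, Ext.comp_add]
  map_smul' s f := by
    have h : R.ofCocycle (s • f) = s • R.ofCocycle f := Submodule.linearMap_qext _ rfl
    rw [h, extOfHom_smul, Ext.comp_smul, RingHom.id_apply]

variable (hT : 𝒜.jideal ≤ Module.annihilator 𝒜.A T.M)

section

include hT

theorem comp_d_eq_zero (f : (R.P n).M →ₗ[𝒜.A] T.M) : f ∘ₗ (R.d n).lin = 0 :=
  LinearMap.range_le_ker_iff.1 ((R.minimal n).trans (jideal_smul_top_le_ker hT f))

theorem mem_cocyc (f : HomSp T R n) : f ∈ cocyc T R n :=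
  R.comp_d_eq_zero hT f

theorem extRel_eq_bot (n : ℕ) : extRel T R n = ⊥ := by
  have h : cobound T R n = ⊥ := by
    cases n with
    | zero => rfl
    | succ n => exact LinearMap.range_eq_bot.2 (LinearMap.ext fun f => R.comp_d_eq_zero hT f)
  rw [extRel, h, Submodule.comap_bot, Submodule.ker_subtype]

theorem syzygyClass_comp_bijective (n : ℕ) {m l : ℕ} (h : n + m = l) :
    Function.Bijective fun y : ModuleExt 𝒜.A (R.Syzygy n) T.M m => (R.syzygyClass n).comp y h := by
  induction n generalizing m l with
  | zero =>
    obtain rfl : m = l := by omega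
    exact extOfHom_equiv_comp_bijective _ m
  | succ n ih =>
    have := R.projective n
    have hs := R.isShortExact_syzygy n
    simp only [syzygyClass,
      Ext.comp_assoc (R.syzygyClass n) hs.extClass _ rfl (add_comm 1 m) (by omega : n + 1 + m = l)]
    exact (ih (by omega)).comp <| hs.extClass_comp_bijective _ fun f =>
      Submodule.linearMap_qext _ (R.comp_d_eq_zero hT f)

theorem cocycleClass_bijective (n : ℕ) : Function.Bijective (R.cocycleClass T n) := by
  have hc := R.syzygyClass_comp_bijective hT n (add_zero n)
  refine (hc.comp extOfHom.bijective).comp (f := R.ofCocycle) ⟨fun f g h => Subtype.ext ?_,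
    fun f => ⟨⟨f ∘ₗ R.toSyzygy n, R.mem_cocyc hT _⟩, Submodule.linearMap_qext _ rfl⟩⟩
  exact congrArg (· ∘ₗ R.toSyzygy n) h

end

/-- The comparison of the Ext group computed from a minimal resolution with the Ext group. -/
def extEquiv (n : ℕ) : ExtQ T R n ≃ₗ[F] ModuleExt 𝒜.A M.M T.M n :=
  (Submodule.quotEquivOfEqBot _ (R.extRel_eq_bot hT n)).trans
    (.ofBijective _ (R.cocycleClass_bijective hT n))

theorem extEquiv_extCls {f : HomSp T R n} (hf : f ∈ cocyc T R n) :
    R.extEquiv hT n (extCls T hf) =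
      (R.syzygyClass n).comp (extOfHom (R.ofCocycle ⟨f, hf⟩)) (add_zero n) :=
  rfl

theorem extEquiv_extCast_heq {m : ℕ} (h : n = m) (x : ExtQ T R n) :
    R.extEquiv hT m (extCast T R h x) ≍ R.extEquiv hT n x := by
  subst h
  rfl

end MinRes

namespace ChainLift

open CategoryTheory.Abelian

variable {F : Type} [Field F] {𝒜 : GradedAlg F} {M T : 𝒜.GMod} {RT : MinRes T} {RM : MinRes M}
  {j : ℕ} {g : (RM.P j).M →ₗ[𝒜.A] T.M}

/-- The map on syzygies induced by a chain map. -/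
def syzygyMap (L : ChainLift T RT RM j g) (m k : ℕ) (h : m = k + j) :
    RM.Syzygy m →ₗ[𝒜.A] RT.Syzygy k :=
  Submodule.mapQ _ _ (L.ℓ m k h) <| by
    subst h
    rintro _ ⟨x, rfl⟩
    exact ⟨_, LinearMap.congr_fun (L.comm k) x⟩

theorem syzygyClass_comp_syzygyMap (hg : g ∈ cocyc T RM j) (L : ChainLift T RT RM j g) (k : ℕ)
    {m : ℕ} (h : m = k + j) :
    (RM.syzygyClass m).comp (extOfHom (L.syzygyMap m k h)) (add_zero m) =
      (RM.cocycleClass T j ⟨g, hg⟩).comp (RT.syzygyClass k) (by omega) := by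
  induction k generalizing m with
  | zero =>
    obtain rfl : m = j := by omega
    have hL : L.syzygyMap m 0 h = RT.syzygyZeroEquiv.symm.toLinearMap ∘ₗ RM.ofCocycle ⟨g, hg⟩ := by
      refine Submodule.linearMap_qext _ (LinearMap.ext fun x => ?_)
      exact (RT.syzygyZeroEquiv_symm_aug _).symm.trans
        (congrArg RT.syzygyZeroEquiv.symm (LinearMap.congr_fun L.comm_aug x))
    rw [hL, ← extOfHom_comp]
    exact (Ext.comp_assoc (RM.syzygyClass m) _ _ (add_zero m) _ (by omega)).symm
  | succ k ih =>
    obtain rfl : m = k + j + 1 := by omega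
    have hn := (RM.isShortExact_syzygy (k + j)).extClass_naturality (RT.isShortExact_syzygy k)
      (a := L.syzygyMap (k + j + 1) (k + 1) h) (b := L.ℓ (k + j) k rfl)
      (c := L.syzygyMap (k + j) k rfl) (Submodule.linearMap_qext _ (L.comm k).symm) rfl
    rw [MinRes.syzygyClass, MinRes.syzygyClass, Ext.comp_assoc _ _ _ _ (add_zero 1) (by omega), hn,
      ← Ext.comp_assoc (a₁₂ := k + j) _ _ _ (add_zero _) _ (by omega), ih rfl]
    exact Ext.comp_assoc _ _ _ _ _ (by omega)

end ChainLift

namespace MinRes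

open CategoryTheory.Abelian

variable {F : Type} [Field F] {𝒜 : GradedAlg F} {M T : 𝒜.GMod} (RT : MinRes T) (RM : MinRes M)

theorem exists_lift_succ {m k : ℕ} {a : (RM.P m).M →ₗ[𝒜.A] (RT.P k).M}
    (ha : LinearMap.range (a ∘ₗ (RM.d m).lin) ≤ LinearMap.range (RT.d k).lin) :
    ∃ b : (RM.P (m + 1)).M →ₗ[𝒜.A] (RT.P (k + 1)).M,
      (RT.d k).lin ∘ₗ b = a ∘ₗ (RM.d m).lin ∧
        LinearMap.range (b ∘ₗ (RM.d (m + 1)).lin) ≤ LinearMap.range (RT.d (k + 1)).lin := by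
  have := RM.projective (m + 1)
  obtain ⟨b, hb⟩ := Module.projective_lifting_property (RT.d k).lin.rangeRestrict
    ((a ∘ₗ (RM.d m).lin).codRestrict _ fun x => ha ⟨x, rfl⟩) (LinearMap.surjective_rangeRestrict _)
  replace hb : (RT.d k).lin ∘ₗ b = a ∘ₗ (RM.d m).lin :=
    congrArg (Submodule.subtype _ ∘ₗ ·) hb
  refine ⟨b, hb, ?_⟩
  rw [RT.exact k, LinearMap.range_le_ker_iff, ← LinearMap.comp_assoc, hb, LinearMap.comp_assoc,
    LinearMap.range_le_ker_iff.1 (RM.exact m).le, LinearMap.comp_zero]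

variable (hT : 𝒜.jideal ≤ Module.annihilator 𝒜.A T.M)
include hT

theorem nonempty_chainLift (j : ℕ) (g : (RM.P j).M →ₗ[𝒜.A] T.M) :
    Nonempty (ChainLift T RT RM j g) := by
  have := RM.projective j
  obtain ⟨a, ha⟩ := Module.projective_lifting_property RT.aug.lin g RT.aug_surj
  have ha' : LinearMap.range (a ∘ₗ (RM.d j).lin) ≤ LinearMap.range (RT.d 0).lin := by
    rw [RT.exact_aug, LinearMap.range_le_ker_iff, ← LinearMap.comp_assoc, ha,
      RM.comp_d_eq_zero hT]
  choose next hnext hnext' using fun (k : ℕ)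
    (b : (RM.P (j + k)).M →ₗ[𝒜.A] (RT.P k).M) hb => RT.exists_lift_succ RM (a := b) hb
  let lift (k : ℕ) : {a : (RM.P (j + k)).M →ₗ[𝒜.A] (RT.P k).M //
      LinearMap.range (a ∘ₗ (RM.d (j + k)).lin) ≤ LinearMap.range (RT.d k).lin} :=
    Nat.rec ⟨a, ha'⟩ (fun k b => ⟨next k b.1 b.2, hnext' k b.1 b.2⟩) k
  let ℓ (m k : ℕ) (h : m = j + k) : (RM.P m).M →ₗ[𝒜.A] (RT.P k).M :=
    Eq.rec (motive := fun m _ => (RM.P m).M →ₗ[𝒜.A] (RT.P k).M) (lift k).1 h.symm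
  have comm (k m : ℕ) (h : m = j + k) :
      (RT.d k).lin ∘ₗ ℓ (m + 1) (k + 1) (by omega) = ℓ m k h ∘ₗ (RM.d m).lin := by
    subst h
    exact hnext k (lift k).1 (lift k).2
  exact ⟨⟨fun m k h => ℓ m k (by omega), ha, fun k => comm k (k + j) (by omega)⟩⟩

theorem extEquiv_yonedaMul {μ : ∀ i j : ℕ, ExtQ T RT i →ₗ[F] ExtQ T RM j →ₗ[F] ExtQ T RM (i + j)}
    (hμ : IsYonedaMul T RT RM μ) (i j : ℕ) (x : ExtQ T RT i) (y : ExtQ T RM j) :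
    RM.extEquiv hT (i + j) (μ i j x y) =
      (RM.extEquiv hT j y).comp (RT.extEquiv hT i x) (add_comm j i) := by
  obtain ⟨⟨f, hf⟩, rfl⟩ := Submodule.mkQ_surjective _ x
  obtain ⟨⟨g, hg⟩, rfl⟩ := Submodule.mkQ_surjective _ y
  obtain ⟨L⟩ := RT.nonempty_chainLift RM hT j g
  have hc := RM.mem_cocyc hT (f ∘ₗ L.ℓ (i + j) i (by omega))
  have hfL : RM.ofCocycle ⟨_, hc⟩ = RT.ofCocycle ⟨f, hf⟩ ∘ₗ L.syzygyMap (i + j) i rfl :=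
    Submodule.linearMap_qext _ rfl
  calc RM.extEquiv hT (i + j) (μ i j (extCls T hf) (extCls T hg))
    _ = RM.extEquiv hT (i + j) (extCls T hc) := by rw [hμ i j f hf g hg L hc]
    _ = ((RM.syzygyClass (i + j)).comp (extOfHom (L.syzygyMap (i + j) i rfl)) (add_zero _)).comp
          (extOfHom (RT.ofCocycle ⟨f, hf⟩)) (add_zero _) := by
      rw [extEquiv_extCls, hfL, ← extOfHom_comp]
      exact (Ext.comp_assoc _ _ _ _ (add_zero 0) (by omega)).symm
    _ = (RM.extEquiv hT j (extCls T hg)).comp (RT.extEquiv hT i (extCls T hf)) (add_comm j i) := by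
      rw [L.syzygyClass_comp_syzygyMap hg]
      exact Ext.comp_assoc _ (RT.syzygyClass i) _ _ (add_zero i) (by omega)

end MinRes

section Comparison

open DirectSum

variable {F : Type} [Field F] {𝒜 : GradedAlg F} {T : 𝒜.GMod} (R : MinRes T)
  (hT : 𝒜.jideal ≤ Module.annihilator 𝒜.A T.M) (r : ℕ)

/-- The components of the Ext algebra are the Ext groups computed from a minimal resolution. -/
def extGradedAlgEquiv (n : ℕ) : ↥((extGradedAlg F 𝒜.A r T.M).grading n) ≃ₗ[F] ExtQ T R (r * n) :=
  (LinearEquiv.ofInjective (lof F ℕ (ExtPiece 𝒜.A r T.M T.M) n) <| by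
    exact of_injective n).symm.trans (R.extEquiv hT (r * n)).symm

variable {r}

theorem extGradedAlgEquiv_eq_iff {n : ℕ} {a : ExtPiece 𝒜.A r T.M T.M n} {x : ExtQ T R (r * n)}
    {z : (extGradedAlg F 𝒜.A r T.M).grading n} (h : z.1 = DirectSum.of _ n a) :
    extGradedAlgEquiv R hT r n z = x ↔ R.extEquiv hT (r * n) x = a := by
  obtain ⟨_, b, rfl⟩ := z
  obtain rfl : b = a := DirectSum.of_injective n h
  refine (LinearEquiv.symm_apply_eq _).trans (eq_comm.trans ?_)
  exact Eq.congr_right ((LinearEquiv.ofInjective _ _).symm_apply_apply b)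

theorem extGradedAlgEquiv_mul {μ : ∀ i j : ℕ, ExtQ T R i →ₗ[F] ExtQ T R j →ₗ[F] ExtQ T R (i + j)}
    (hμ : IsYonedaMul T R R μ) {m n : ℕ} (x : (extGradedAlg F 𝒜.A r T.M).grading m)
    (y : (extGradedAlg F 𝒜.A r T.M).grading n) (h : r * m + r * n = r * (m + n)) :
    extGradedAlgEquiv R hT r (m + n) ⟨(x : (extGradedAlg F 𝒜.A r T.M).A) * y,
        SetLike.mul_mem_graded x.2 y.2⟩ =
      extCast T R h (μ (r * m) (r * n) (extGradedAlgEquiv R hT r m x)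
        (extGradedAlgEquiv R hT r n y)) := by
  obtain ⟨_, a, rfl⟩ := x
  obtain ⟨_, b, rfl⟩ := y
  refine (extGradedAlgEquiv_eq_iff R hT (DirectSum.of_mul_of a b)).2 (eq_of_heq ?_)
  refine (R.extEquiv_extCast_heq hT h _).trans ?_
  rw [R.extEquiv_yonedaMul R hT hμ, (extGradedAlgEquiv_eq_iff R hT rfl).1 rfl,
    (extGradedAlgEquiv_eq_iff R hT rfl).1 rfl]
  exact ModuleExt.comp_heq_comp _ _ _ (by ring)

end Comparison

end GradedAlg

theorem jump_three (d n : ℕ) : jump d 3 n = n / 3 * d + n % 3 := by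
  unfold jump
  congr 2
  omega

theorem jump_three_strictMono {d : ℕ} (hd : 3 ≤ d) : StrictMono (jump d 3) := by
  refine strictMono_nat_of_lt_succ fun n => ?_
  rw [jump_three, jump_three]
  obtain ⟨hq, hr⟩ | ⟨hq, hr, hn⟩ : (n + 1) / 3 = n / 3 ∧ (n + 1) % 3 = n % 3 + 1 ∨
      (n + 1) / 3 = n / 3 + 1 ∧ (n + 1) % 3 = 0 ∧ n % 3 = 2 := by omega
  · rw [hq, hr]
    omega
  · rw [hq, hr, hn, add_mul]
    omega

theorem jump_three_add_mul (d n k : ℕ) : jump d 3 (n + 3 * k) = jump d 3 n + k * d := by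
  rw [jump_three, jump_three, Nat.add_mul_div_left n k three_pos, Nat.add_mul_mod_self_left]
  ring

open GradedAlg in
theorem ext_subalgebra_isKoszul_general
    {F : Type} [Field F] (𝒜 : GradedAlg F) [IsSemisimpleRing ↥(𝒜.grading 0)]
    (T : 𝒜.GMod) (hT : IsTrivialGMod T) {e : ℕ → ℤ} (he : StrictMono e) (he0 : e 0 = 0)
    (R₀ : MinRes T) (hR₀ : ∀ n, (R₀.P n).GenInDeg (e n))
    {r : ℕ} (hr : 0 < r) {t : ℤ} (het : ∀ n, e (n + r) = e n + t)
    (R : MinRes T)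
    (μ : ∀ i j : ℕ, ExtQ T R i →ₗ[F] ExtQ T R j →ₗ[F] ExtQ T R (i + j))
    (hμ : IsYonedaMul T R R μ) :
    ∃ (B : GradedAlg F) (φ : ∀ n : ℕ, ↥(B.grading n) ≃ₗ[F] ExtQ T R (r * n)),
      (∀ (m n : ℕ) (x : ↥(B.grading m)) (y : ↥(B.grading n)),
        φ (m + n) ⟨(x : B.A) * (y : B.A), SetLike.mul_mem_graded x.2 y.2⟩ =
          extCast T R (by ring) (μ (r * m) (r * n) (φ m x) (φ n y))) ∧
      ∃ T' : B.GMod, IsTrivialGMod T' ∧ B.IsKoszulMod T' :=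
  ⟨extGradedAlg F 𝒜.A r T.M, extGradedAlgEquiv R hT.jideal_le_annihilator r,
    fun _ _ x y => extGradedAlgEquiv_mul R hT.jideal_le_annihilator hμ x y _,
    _, isTrivialGMod_top (ExtModule.equivExtAlgebra F),
    hT.isKoszulMod_extGMod he he0 (R₀.isDeltaKoszul hR₀) hr het⟩

open GradedAlg in
/-- **Theorem 2.8(2).** Let `A` be piecewise-Koszul with period `p = 3` and jump degree
`d`.  Then for every `k ≥ 1` the algebra `E_k(A) = ⊕_{n≥0} Ext^{3kn}_A(A_0,A_0)`
(with Yoneda multiplication, graded by `n`) is a Koszul algebra: there is a graded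
algebra `B` whose components correspond to the `Ext^{3kn}` and whose multiplication
corresponds to the Yoneda product, such that the trivial `B`-module admits a minimal
graded projective resolution with `n`-th term generated in degree `n`. -/
theorem ext_subalgebra_isKoszul
    {F : Type} [Field F] (𝒜 : GradedAlg F) (hA : 𝒜.Standing)
    (d : ℕ) (hd : 3 ≤ d)
    (T : 𝒜.GMod) (hT : IsTrivialGMod T) (hpk : 𝒜.IsPKAlg 3 d T)
    (R : MinRes T)
    (μ : ∀ i j : ℕ, ExtQ T R i →ₗ[F] ExtQ T R j →ₗ[F] ExtQ T R (i + j))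
    (hμ : IsYonedaMul T R R μ)
    (k : ℕ) (hk : 1 ≤ k) :
    ∃ (B : GradedAlg F) (φ : ∀ n : ℕ, ↥(B.grading n) ≃ₗ[F] ExtQ T R (3 * k * n)),
      (∀ (m n : ℕ) (x : ↥(B.grading m)) (y : ↥(B.grading n)),
        φ (m + n) ⟨(x : B.A) * (y : B.A), SetLike.mul_mem_graded x.2 y.2⟩ =
          extCast T R (by ring) (μ (3 * k * m) (3 * k * n) (φ m x) (φ n y))) ∧
      ∃ T' : B.GMod, IsTrivialGMod T' ∧ B.IsKoszulMod T' := by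
  have := hA.semisimple
  obtain ⟨R₀, hR₀⟩ := hpk
  exact ext_subalgebra_isKoszul_general 𝒜 T hT (e := fun n => jump d 3 n)
    (Nat.strictMono_cast.comp (jump_three_strictMono hd)) (by simp [jump_three]) R₀
    (by simpa only [add_zero] using hR₀) (by omega) (t := k * d)
    (fun n => by simp only [jump_three_add_mul, Nat.cast_add, Nat.cast_mul]) R μ hμ
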